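/- arXiv:1109.4353 — 3 statements merged into one kernel-verified Lean document; each statement's English description precedes it below -/
import Mathlib

section
/- Let R be a conditional rewrite system that is left-linear and semi-closed, and such that →_R is a normal conditional rewrite relation, i.e. in every rule d⃗=c⃗ ⊃ l ↦ r the terms c1,…,cn are closed terms in →_R-normal form. If →_R is confluent, then →_{β∪R} is confluent. -/
/-!
The proof goes through the Hindley–Rosen lemma (`hindley_rosen`): β-reduction is confluent
(`beta_confluent`, by the diamond property of parallel β-reduction `Par`), `→_R` is confluent by
hypothesis, so it is enough that the two relations commute (`beta_commutes`).

Commutation follows by tiling from a local square (`CondRew.par_square`): if `t ▷ u` by parallel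
β-reduction and `t →_R v`, then `v ▷ w` and `u →_R* w` for some `w`. It is proved for each stratum
`→_{R_i}` by induction on `i` and, inside a stratum, by induction on `t ▷ u`
(`CStep.par_square`). The essential case is a step `lσ →_R rσ`. Since `l` is linear and algebraic,
no β-redex overlaps it, so the β-step leads to `lτ` with `σ ▷ τ` pointwise (`Par.of_pat`), and
`rσ ▷ rτ`. The conditions still hold for `τ`: as `c` is a closed `→_R`-normal form, `dσ ↓ cσ` means
`dσ →* c` in the previous stratum, and the square for that stratum, applied to `dσ ▷ dτ`, gives
`dτ →* c` because the applicative term `c` has no β-redex.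
-/

set_option autoImplicit false

/-- λ-terms over a signature `Sig`, in de Bruijn representation
(terms are identified up to α-conversion). -/
inductive Tm (Sig : Type) : Type
  | var : ℕ → Tm Sig
  | app : Tm Sig → Tm Sig → Tm Sig
  | lam : Tm Sig → Tm Sig
  | sym : Sig → Tm Sig

namespace Tm

variable {Sig : Type}

/-- Shift the free de Bruijn indices `≥ d` up by one. -/
def lift (d : ℕ) : Tm Sig → Tm Sig
  | var n => if n < d then var n else var (n + 1)
  | app t u => app (lift d t) (lift d u)
  | lam t => lam (lift (d + 1) t)
  | sym f => sym f

/-- Lift a parallel substitution under one binder. -/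
def up (σ : ℕ → Tm Sig) : ℕ → Tm Sig
  | 0 => var 0
  | n + 1 => lift 0 (σ n)

/-- Capture-avoiding (parallel) substitution. -/
def subst (σ : ℕ → Tm Sig) : Tm Sig → Tm Sig
  | var n => σ n
  | app t u => app (subst σ t) (subst σ u)
  | lam t => lam (subst (up σ) t)
  | sym f => sym f

def scons (u : Tm Sig) (σ : ℕ → Tm Sig) : ℕ → Tm Sig
  | 0 => u
  | n + 1 => σ n

/-- `subst1 u t` substitutes `u` for the de Bruijn variable `0` in `t`. -/
def subst1 (u t : Tm Sig) : Tm Sig := subst (scons u var) t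

/-- `FVar t n` : de Bruijn index `n` occurs free in `t`. -/
def FVar : Tm Sig → ℕ → Prop
  | var m, n => m = n
  | app t u, n => FVar t n ∨ FVar u n
  | lam t, n => FVar t (n + 1)
  | sym _, _ => False

/-- Closed terms. -/
def ClosedTm (t : Tm Sig) : Prop := ∀ n, ¬ FVar t n

def countVar : Tm Sig → ℕ → ℕ
  | var m, n => if m = n then 1 else 0
  | app t u, n => countVar t n + countVar u n
  | lam t, n => countVar t (n + 1)
  | sym _, _ => 0

/-- Linear terms: each variable occurs at most once. -/
def LinearTm (t : Tm Sig) : Prop := ∀ n, countVar t n ≤ 1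

/-- `appList h [t1, …, tn] = h t1 … tn`. -/
def appList (h : Tm Sig) : List (Tm Sig) → Tm Sig
  | [] => h
  | u :: us => appList (app h u) us

/-- Applicative terms: terms containing no abstraction. -/
inductive Applicative : Tm Sig → Prop
  | var (n : ℕ) : Applicative (var n)
  | sym (f : Sig) : Applicative (sym f)
  | app {t u : Tm Sig} : Applicative t → Applicative u → Applicative (app t u)

/-- Algebraic terms: `t ::= x | f t1 … tn`. -/
inductive Algebraic : Tm Sig → Prop
  | var (n : ℕ) : Algebraic (var n)
  | symApp (f : Sig) (ts : List (Tm Sig)) :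
      (∀ t ∈ ts, Algebraic t) → Algebraic (appList (sym f) ts)

/-- `Subterm s t` : `s` is a subterm of `t`. -/
inductive Subterm : Tm Sig → Tm Sig → Prop
  | refl (t : Tm Sig) : Subterm t t
  | appL {s t u : Tm Sig} : Subterm s t → Subterm s (app t u)
  | appR {s t u : Tm Sig} : Subterm s u → Subterm s (app t u)
  | lam {s t : Tm Sig} : Subterm s t → Subterm s (lam t)

/-- `lamN m t = λ…λ.t` with `m` abstractions. -/
def lamN : ℕ → Tm Sig → Tm Sig
  | 0, t => t
  | m + 1, t => lam (lamN m t)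

end Tm

/-- β-reduction: the smallest rewrite relation (closed under abstraction, left and
right application and substitution) with `(λ.t) u →β t[0 := u]`. -/
inductive Beta {Sig : Type} : Tm Sig → Tm Sig → Prop
  | beta (t u : Tm Sig) : Beta (Tm.app (Tm.lam t) u) (Tm.subst1 u t)
  | abs {t u : Tm Sig} : Beta t u → Beta (Tm.lam t) (Tm.lam u)
  | appL {t u v : Tm Sig} : Beta t u → Beta (Tm.app t v) (Tm.app u v)
  | appR {t u v : Tm Sig} : Beta t u → Beta (Tm.app v t) (Tm.app v u)
  | substC (σ : ℕ → Tm Sig) {t u : Tm Sig} : Beta t u → Beta (Tm.subst σ t) (Tm.subst σ u)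

/-- Tait–Martin-Löf parallel β-reduction: the smallest parallel rewrite relation
with `(λ.t₁) t₂ ▷β u₁[0 := u₂]` whenever `t₁ ▷β u₁` and `t₂ ▷β u₂`. -/
inductive PBeta {Sig : Type} : Tm Sig → Tm Sig → Prop
  | var (n : ℕ) : PBeta (Tm.var n) (Tm.var n)
  | sym (f : Sig) : PBeta (Tm.sym f) (Tm.sym f)
  | app {t₁ u₁ t₂ u₂ : Tm Sig} : PBeta t₁ u₁ → PBeta t₂ u₂ →
      PBeta (Tm.app t₁ t₂) (Tm.app u₁ u₂)
  | abs {t u : Tm Sig} : PBeta t u → PBeta (Tm.lam t) (Tm.lam u)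
  | substC (σ : ℕ → Tm Sig) {t u : Tm Sig} : PBeta t u → PBeta (Tm.subst σ t) (Tm.subst σ u)
  | beta {t₁ u₁ t₂ u₂ : Tm Sig} : PBeta t₁ u₁ → PBeta t₂ u₂ →
      PBeta (Tm.app (Tm.lam t₁) t₂) (Tm.subst1 u₂ u₁)

/-- β-normal forms. -/
def BetaNormal {Sig : Type} (t : Tm Sig) : Prop := ∀ u, ¬ Beta t u

/-- `IsBnf t n` : `n` is a β-normal form of `t`. -/
def IsBnf {Sig : Type} (t n : Tm Sig) : Prop :=
  Relation.ReflTransGen Beta t n ∧ BetaNormal n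

/-- Weakly β-normalizing terms. -/
def WNbeta {Sig : Type} (t : Tm Sig) : Prop := ∃ n, IsBnf t n

/-- Conditional rewrite rule `d1 = c1 ∧ … ∧ dn = cn ⊃ l ↦ r`:  every variable of
the `di`, `ci` and `r` occurs in `l`, and `l` is a non-variable algebraic term. -/
structure CondRule (Sig : Type) where
  conds : List (Tm Sig × Tm Sig)
  lhs : Tm Sig
  rhs : Tm Sig
  lhs_alg : Tm.Algebraic lhs
  lhs_not_var : ∀ n, lhs ≠ Tm.var n
  fv_conds : ∀ p ∈ conds,
    (∀ n, Tm.FVar p.1 n → Tm.FVar lhs n) ∧ (∀ n, Tm.FVar p.2 n → Tm.FVar lhs n)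
  fv_rhs : ∀ n, Tm.FVar rhs n → Tm.FVar lhs n

/-- Joinability: a common reduct. -/
def Joinable {α : Type} (R : α → α → Prop) (t u : α) : Prop :=
  ∃ v, Relation.ReflTransGen R t v ∧ Relation.ReflTransGen R u v

/-- One stratum of conditional rewriting: the smallest rewrite relation such that
`lσ → rσ` for every rule whose conditions are joinable w.r.t. `prev`. -/
inductive CondStep {Sig : Type} (Rules : Set (CondRule Sig))
    (prev : Tm Sig → Tm Sig → Prop) : Tm Sig → Tm Sig → Prop
  | rule {ρ : CondRule Sig} (hρ : ρ ∈ Rules) (σ : ℕ → Tm Sig)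
      (hconds : ∀ p ∈ ρ.conds, Joinable prev (Tm.subst σ p.1) (Tm.subst σ p.2)) :
      CondStep Rules prev (Tm.subst σ ρ.lhs) (Tm.subst σ ρ.rhs)
  | abs {t u : Tm Sig} : CondStep Rules prev t u →
      CondStep Rules prev (Tm.lam t) (Tm.lam u)
  | appL {t u v : Tm Sig} : CondStep Rules prev t u →
      CondStep Rules prev (Tm.app t v) (Tm.app u v)
  | appR {t u v : Tm Sig} : CondStep Rules prev t u →
      CondStep Rules prev (Tm.app v t) (Tm.app v u)
  | substC (σ : ℕ → Tm Sig) {t u : Tm Sig} : CondStep Rules prev t u →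
      CondStep Rules prev (Tm.subst σ t) (Tm.subst σ u)

/-- Stratified conditional rewriting `→_{R_i}`. -/
def CondRel {Sig : Type} (Rules : Set (CondRule Sig)) : ℕ → Tm Sig → Tm Sig → Prop
  | 0 => fun _ _ => False
  | i + 1 => CondStep Rules (CondRel Rules i)

/-- Conditional rewriting `→_R = ⋃ i, →_{R_i}`. -/
def CondRew {Sig : Type} (Rules : Set (CondRule Sig)) (t u : Tm Sig) : Prop :=
  ∃ i, CondRel Rules i t u

/-- Stratified β-conditional rewriting `→_{R(β)_i}`: conditions are evaluated
w.r.t. `→_{β ∪ R(β)_{i-1}}`. -/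
def BCondRel {Sig : Type} (Rules : Set (CondRule Sig)) : ℕ → Tm Sig → Tm Sig → Prop
  | 0 => fun _ _ => False
  | i + 1 => CondStep Rules (fun a b => Beta a b ∨ BCondRel Rules i a b)

/-- β-conditional rewriting `→_{R(β)} = ⋃ i, →_{R(β)_i}`. -/
def BCondRew {Sig : Type} (Rules : Set (CondRule Sig)) (t u : Tm Sig) : Prop :=
  ∃ i, BCondRel Rules i t u

def IsConfluent {α : Type} (R : α → α → Prop) : Prop :=
  ∀ t u v, Relation.ReflTransGen R t u → Relation.ReflTransGen R t v →
    ∃ w, Relation.ReflTransGen R u w ∧ Relation.ReflTransGen R v w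

def ConfluentOn {α : Type} (S : Set α) (R : α → α → Prop) : Prop :=
  ∀ t ∈ S, ∀ u v, Relation.ReflTransGen R t u → Relation.ReflTransGen R t v →
    ∃ w, Relation.ReflTransGen R u w ∧ Relation.ReflTransGen R v w

def Commutes {α : Type} (R₁ R₂ : α → α → Prop) : Prop :=
  ∀ s u t, Relation.ReflTransGen R₁ s u → Relation.ReflTransGen R₂ s t →
    ∃ v, Relation.ReflTransGen R₂ u v ∧ Relation.ReflTransGen R₁ t v

def LeftLinear {Sig : Type} (Rules : Set (CondRule Sig)) : Prop :=
  ∀ ρ ∈ Rules, Tm.LinearTm ρ.lhs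

/-- Semi-closed systems: in every rule the `ci` are closed applicative terms. -/
def SemiClosed {Sig : Type} (Rules : Set (CondRule Sig)) : Prop :=
  ∀ ρ ∈ Rules, ∀ p ∈ ρ.conds, Tm.Applicative p.2 ∧ Tm.ClosedTm p.2

def RightApplicative {Sig : Type} (Rules : Set (CondRule Sig)) : Prop :=
  ∀ ρ ∈ Rules, Tm.Applicative ρ.rhs

def RightAlgebraic {Sig : Type} (Rules : Set (CondRule Sig)) : Prop :=
  ∀ ρ ∈ Rules, Tm.Algebraic ρ.rhs

/-- Algebraic systems: in every rule the `di`, `ci` and `r` are algebraic. -/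
def AlgebraicSys {Sig : Type} (Rules : Set (CondRule Sig)) : Prop :=
  ∀ ρ ∈ Rules, (∀ p ∈ ρ.conds, Tm.Algebraic p.1 ∧ Tm.Algebraic p.2) ∧ Tm.Algebraic ρ.rhs

/-- A term respects the arity `a` if it contains no subterm `f t1 … tn` with `n > a f`. -/
def RespectsArity {Sig : Type} (a : Sig → ℕ) (t : Tm Sig) : Prop :=
  ∀ (f : Sig) (ts : List (Tm Sig)),
    Tm.Subterm (Tm.appList (Tm.sym f) ts) t → ts.length ≤ a f

/-- A conditional rule respects `a` if the `di`, `ci` and both sides of `l ↦ r`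
respect `a`, and `l = f l1 … lk` with `k = a f`. -/
def RuleRespectsArity {Sig : Type} (a : Sig → ℕ) (ρ : CondRule Sig) : Prop :=
  (∀ p ∈ ρ.conds, RespectsArity a p.1 ∧ RespectsArity a p.2) ∧
  RespectsArity a ρ.lhs ∧ RespectsArity a ρ.rhs ∧
  ∃ (f : Sig) (ls : List (Tm Sig)), ρ.lhs = Tm.appList (Tm.sym f) ls ∧ ls.length = a f

def SysRespectsArity {Sig : Type} (a : Sig → ℕ) (Rules : Set (CondRule Sig)) : Prop :=
  ∀ ρ ∈ Rules, RuleRespectsArity a ρ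

/-- `AN_a` : terms having a β-normal form, whose β-normal form respects `a`. -/
def ANset {Sig : Type} (a : Sig → ℕ) : Set (Tm Sig) :=
  {t | ∃ n, IsBnf t n ∧ RespectsArity a n}

/-- The rewrite relation of the unconditional system `R̄` containing `l ↦ di` and
`l ↦ r` for each rule `d⃗ = c⃗ ⊃ l ↦ r` of `R`. -/
inductive BarRel {Sig : Type} (Rules : Set (CondRule Sig)) : Tm Sig → Tm Sig → Prop
  | ruleCond {ρ : CondRule Sig} (hρ : ρ ∈ Rules) {p : Tm Sig × Tm Sig} (hp : p ∈ ρ.conds)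
      (σ : ℕ → Tm Sig) : BarRel Rules (Tm.subst σ ρ.lhs) (Tm.subst σ p.1)
  | ruleRhs {ρ : CondRule Sig} (hρ : ρ ∈ Rules) (σ : ℕ → Tm Sig) :
      BarRel Rules (Tm.subst σ ρ.lhs) (Tm.subst σ ρ.rhs)
  | abs {t u : Tm Sig} : BarRel Rules t u → BarRel Rules (Tm.lam t) (Tm.lam u)
  | appL {t u v : Tm Sig} : BarRel Rules t u → BarRel Rules (Tm.app t v) (Tm.app u v)
  | appR {t u v : Tm Sig} : BarRel Rules t u → BarRel Rules (Tm.app v t) (Tm.app v u)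
  | substC (σ : ℕ → Tm Sig) {t u : Tm Sig} : BarRel Rules t u →
      BarRel Rules (Tm.subst σ t) (Tm.subst σ u)

/-- Conditionally `(R, a)`-stable sets of terms. -/
def CondStable {Sig : Type} (Rules : Set (CondRule Sig)) (a : Sig → ℕ)
    (S : Set (Tm Sig)) : Prop :=
  (∀ t ∈ S, RespectsArity a t) ∧
  (∀ t ∈ S, ∀ u, (Beta t u ∨ BarRel Rules t u) → u ∈ S) ∧
  (∀ t ∈ S, ∀ u, Tm.Subterm u t → u ∈ S)

/-- Head β-step along an application spine. -/
inductive HeadAux {Sig : Type} : Tm Sig → Tm Sig → Prop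
  | beta (b a₀ : Tm Sig) : HeadAux (Tm.app (Tm.lam b) a₀) (Tm.subst1 a₀ b)
  | app {t u : Tm Sig} (v : Tm Sig) : HeadAux t u → HeadAux (Tm.app t v) (Tm.app u v)

/-- Head β-reduction `→h` : `λx⃗.(λy.b) a₀ a₁ … aₙ →h λx⃗.b[y:=a₀] a₁ … aₙ`. -/
inductive HeadRed {Sig : Type} : Tm Sig → Tm Sig → Prop
  | base {t u : Tm Sig} : HeadAux t u → HeadRed t u
  | lam {t u : Tm Sig} : HeadRed t u → HeadRed (Tm.lam t) (Tm.lam u)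

/-- The relation `≻` : (a) `λx⃗.v a1 … an ≻ ai` for `v` a variable or a symbol and
`n > 0`; (b) `λx⃗.(λy.b) a0 a1 … an ≻ λx⃗.b[y:=a0] a1 … an` (a head β-step). -/
def SuccRel {Sig : Type} (t u : Tm Sig) : Prop :=
  (∃ (m : ℕ) (h : Tm Sig) (args : List (Tm Sig)),
    ((∃ n, h = Tm.var n) ∨ (∃ f, h = Tm.sym f)) ∧ args ≠ [] ∧
    t = Tm.lamN m (Tm.appList h args) ∧ u ∈ args)
  ∨ HeadRed t u

/-- The nested parallelization `▷_{R_i}` of `→_{R_i}`: the smallest parallel rewrite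
relation with `lσ ▷ rτ` whenever `lσ →_{R_i} rσ` and `σ ▷ τ`. -/
inductive NPar {Sig : Type} (Rules : Set (CondRule Sig)) (i : ℕ) : Tm Sig → Tm Sig → Prop
  | var (n : ℕ) : NPar Rules i (Tm.var n) (Tm.var n)
  | sym (f : Sig) : NPar Rules i (Tm.sym f) (Tm.sym f)
  | app {t₁ u₁ t₂ u₂ : Tm Sig} : NPar Rules i t₁ u₁ → NPar Rules i t₂ u₂ →
      NPar Rules i (Tm.app t₁ t₂) (Tm.app u₁ u₂)
  | abs {t u : Tm Sig} : NPar Rules i t u → NPar Rules i (Tm.lam t) (Tm.lam u)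
  | substC (σ : ℕ → Tm Sig) {t u : Tm Sig} : NPar Rules i t u →
      NPar Rules i (Tm.subst σ t) (Tm.subst σ u)
  | rule {ρ : CondRule Sig} (hρ : ρ ∈ Rules) (σ τ : ℕ → Tm Sig)
      (hstep : CondRel Rules i (Tm.subst σ ρ.lhs) (Tm.subst σ ρ.rhs))
      (hστ : ∀ n, NPar Rules i (σ n) (τ n)) :
      NPar Rules i (Tm.subst σ ρ.lhs) (Tm.subst τ ρ.rhs)

/-- The smallest parallel rewrite relation containing `R`. -/
inductive ParCl {Sig : Type} (R : Tm Sig → Tm Sig → Prop) : Tm Sig → Tm Sig → Prop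
  | base {t u : Tm Sig} : R t u → ParCl R t u
  | var (n : ℕ) : ParCl R (Tm.var n) (Tm.var n)
  | sym (f : Sig) : ParCl R (Tm.sym f) (Tm.sym f)
  | app {t₁ u₁ t₂ u₂ : Tm Sig} : ParCl R t₁ u₁ → ParCl R t₂ u₂ →
      ParCl R (Tm.app t₁ t₂) (Tm.app u₁ u₂)
  | abs {t u : Tm Sig} : ParCl R t u → ParCl R (Tm.lam t) (Tm.lam u)
  | substC (σ : ℕ → Tm Sig) {t u : Tm Sig} : ParCl R t u →
      ParCl R (Tm.subst σ t) (Tm.subst σ u)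

/-- A rooted β-conditional rewrite step `lσ →_{R(β)_i} rσ` for the rule `ρ` and the
substitution `σ`: `ρ ∈ R` and the conditions of `ρ` instantiated by `σ` are joinable
w.r.t. `→_{β ∪ R(β)_{i-1}}`. -/
def RootedBStep {Sig : Type} (Rules : Set (CondRule Sig)) :
    ℕ → CondRule Sig → (ℕ → Tm Sig) → Prop
  | 0 => fun _ _ => False
  | i + 1 => fun ρ σ => ρ ∈ Rules ∧
      ∀ p ∈ ρ.conds,
        Joinable (fun a b => Beta a b ∨ BCondRel Rules i a b)
          (Tm.subst σ p.1) (Tm.subst σ p.2)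

/-- Subterm at a position (positions only descend through applications, which is
enough for algebraic left-hand sides). -/
def subtermAt {Sig : Type} : Tm Sig → List Bool → Option (Tm Sig)
  | t, [] => some t
  | Tm.app a _, false :: p => subtermAt a p
  | Tm.app _ b, true :: p => subtermAt b p
  | _, _ :: _ => none

/-- Replacement at a position. -/
def replaceAt {Sig : Type} : Tm Sig → List Bool → Tm Sig → Option (Tm Sig)
  | _, [], s => some s
  | Tm.app a b, false :: p, s => (replaceAt a p s).map (fun a' => Tm.app a' b)
  | Tm.app a b, true :: p, s => (replaceAt b p s).map (fun b' => Tm.app a b')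
  | _, _ :: _, _ => none

/-- Conditional critical pairs: an overlap of `ρ₂` at a non-variable position `p` of
the left-hand side of `ρ₁` via a most general unifier (here presented with a pair of
substitutions, which accounts for variable-disjoint renamings). -/
def CriticalPair {Sig : Type} (Rules : Set (CondRule Sig))
    (conds : List (Tm Sig × Tm Sig)) (s t : Tm Sig) : Prop :=
  ∃ ρ₁ ∈ Rules, ∃ ρ₂ ∈ Rules, ∃ (p : List Bool) (w : Tm Sig) (σ₁ σ₂ : ℕ → Tm Sig),
    subtermAt ρ₁.lhs p = some w ∧
    (∀ n, w ≠ Tm.var n) ∧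
    ¬ (ρ₁ = ρ₂ ∧ p = []) ∧
    Tm.subst σ₁ w = Tm.subst σ₂ ρ₂.lhs ∧
    (∀ τ₁ τ₂ : ℕ → Tm Sig, Tm.subst τ₁ w = Tm.subst τ₂ ρ₂.lhs →
      ∃ δ : ℕ → Tm Sig, (∀ n, Tm.FVar ρ₁.lhs n → τ₁ n = Tm.subst δ (σ₁ n)) ∧
        (∀ n, Tm.FVar ρ₂.lhs n → τ₂ n = Tm.subst δ (σ₂ n))) ∧
    conds = ρ₁.conds.map (fun q => (Tm.subst σ₁ q.1, Tm.subst σ₁ q.2)) ++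
            ρ₂.conds.map (fun q => (Tm.subst σ₂ q.1, Tm.subst σ₂ q.2)) ∧
    replaceAt (Tm.subst σ₁ ρ₁.lhs) p (Tm.subst σ₂ ρ₂.rhs) = some s ∧
    t = Tm.subst σ₁ ρ₁.rhs

/-- A symbol is defined if it heads the left-hand side of some rule. -/
def DefinedSym {Sig : Type} (Rules : Set (CondRule Sig)) (f : Sig) : Prop :=
  ∃ ρ ∈ Rules, ∃ ts : List (Tm Sig), ρ.lhs = Tm.appList (Tm.sym f) ts

/-- OrthonormalSys systems. -/
def OrthonormalSys {Sig : Type} (Rules : Set (CondRule Sig)) : Prop :=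
  LeftLinear Rules ∧
  (∀ ρ ∈ Rules, ∀ p ∈ ρ.conds, Tm.ClosedTm p.2 ∧ BetaNormal p.2 ∧
    ∀ f, DefinedSym Rules f → ¬ Tm.Subterm (Tm.sym f) p.2) ∧
  (∀ (conds : List (Tm Sig × Tm Sig)) (s t : Tm Sig), CriticalPair Rules conds s t →
    ∃ i j : Fin conds.length, i ≠ j ∧
      (conds.get i).1 = (conds.get j).1 ∧ (conds.get i).2 ≠ (conds.get j).2)

/-- Dershowitz–Manna multiset extension of `<` on `ℕ`. -/
def MulLt (s t : Multiset ℕ) : Prop :=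
  ∃ X Y Z : Multiset ℕ, Y ≠ 0 ∧ s = Z + X ∧ t = Z + Y ∧ ∀ x ∈ X, ∃ y ∈ Y, x < y

/-! ### Maps between reflexive-transitive closures -/

theorem star_map {α β : Type} {r : α → α → Prop} {p : β → β → Prop} (f : α → β)
    (h : ∀ a b, r a b → p (f a) (f b)) {a b : α} (hab : Relation.ReflTransGen r a b) :
    Relation.ReflTransGen p (f a) (f b) := by
  induction hab with
  | refl => exact .refl
  | tail _ hb ih => exact ih.tail (h _ _ hb)

theorem star_mono {α : Type} {r p : α → α → Prop} {a b : α}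
    (hab : Relation.ReflTransGen r a b) (h : ∀ a b, r a b → p a b) :
    Relation.ReflTransGen p a b :=
  star_map id h hab

/-! ### Substitution calculus -/

namespace Tm

variable {Sig : Type}

/-- Renaming of free de Bruijn indices along `ξ`; the binder case shifts `ξ` under `λ`. -/
def ren (ξ : ℕ → ℕ) : Tm Sig → Tm Sig
  | var n => var (ξ n)
  | app t u => app (ren ξ t) (ren ξ u)
  | lam t => lam (ren (fun n => Nat.casesOn n 0 (fun m => ξ m + 1)) t)
  | sym f => sym f

theorem lift_eq_ren (t : Tm Sig) : ∀ d : ℕ,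
    lift d t = ren (fun n => if n < d then n else n + 1) t := by
  induction t with
  | var n => intro d; simp only [lift, ren]; split <;> rfl
  | app t u iht ihu => intro d; simp only [lift, ren, iht, ihu]
  | sym f => intro d; rfl
  | lam t ih =>
    intro d
    simp only [lift, ren, ih]
    congr 2
    funext n
    cases n with
    | zero => simp
    | succ m =>
      by_cases h : m < d
      · simp [h]
      · simp [h]

theorem lift_zero_eq_ren (t : Tm Sig) : lift 0 t = ren Nat.succ t := by
  rw [lift_eq_ren]; rfl

theorem subst_ren (t : Tm Sig) : ∀ (ξ : ℕ → ℕ) (σ : ℕ → Tm Sig),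
    subst σ (ren ξ t) = subst (fun n => σ (ξ n)) t := by
  induction t with
  | var n => intro ξ σ; rfl
  | app t u iht ihu => intro ξ σ; simp only [ren, subst, iht, ihu]
  | sym f => intro ξ σ; rfl
  | lam t ih =>
    intro ξ σ
    simp only [ren, subst, ih]
    congr 2
    funext n
    cases n <;> rfl

theorem ren_eq_subst (t : Tm Sig) : ∀ ξ : ℕ → ℕ,
    ren ξ t = subst (fun n => var (ξ n)) t := by
  induction t with
  | var n => intro ξ; rfl
  | app t u iht ihu => intro ξ; simp only [ren, subst, iht, ihu]
  | sym f => intro ξ; rfl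
  | lam t ih =>
    intro ξ
    simp only [ren, subst, ih]
    congr 2
    funext n
    cases n <;> rfl

theorem ren_subst (t : Tm Sig) : ∀ (ξ : ℕ → ℕ) (σ : ℕ → Tm Sig),
    ren ξ (subst σ t) = subst (fun n => ren ξ (σ n)) t := by
  induction t with
  | var n => intro ξ σ; rfl
  | app t u iht ihu => intro ξ σ; simp only [ren, subst, iht, ihu]
  | sym f => intro ξ σ; rfl
  | lam t ih =>
    intro ξ σ
    simp only [ren, subst, ih]
    congr 2
    funext n
    cases n with
    | zero => rfl
    | succ m =>
      simp only [up, lift_zero_eq_ren]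
      rw [ren_eq_subst _ Nat.succ, ren_eq_subst _ Nat.succ, ren_eq_subst (subst _ _),
        ren_eq_subst (σ m), ← ren_eq_subst _ Nat.succ, ← ren_eq_subst _ ξ, subst_ren, subst_ren]

theorem subst_subst (t : Tm Sig) : ∀ (σ τ : ℕ → Tm Sig),
    subst σ (subst τ t) = subst (fun n => subst σ (τ n)) t := by
  induction t with
  | var n => intro σ τ; rfl
  | app t u iht ihu => intro σ τ; simp only [subst, iht, ihu]
  | sym f => intro σ τ; rfl
  | lam t ih =>
    intro σ τ
    simp only [subst, ih]
    congr 2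
    funext n
    cases n with
    | zero => rfl
    | succ m =>
      simp only [up, lift_zero_eq_ren, subst_ren, ren_subst]

theorem subst_congr (t : Tm Sig) : ∀ {σ τ : ℕ → Tm Sig},
    (∀ n, FVar t n → σ n = τ n) → subst σ t = subst τ t := by
  induction t with
  | var n => intro σ τ h; exact h n rfl
  | app t u iht ihu =>
    intro σ τ h
    simp only [subst]
    rw [iht fun n hn => h n (Or.inl hn), ihu fun n hn => h n (Or.inr hn)]
  | sym f => intro σ τ _; rfl
  | lam t ih =>
    intro σ τ h
    simp only [subst]
    rw [ih]
    intro n hn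
    cases n with
    | zero => rfl
    | succ m => simp only [up]; rw [h m hn]

theorem subst_var (t : Tm Sig) : subst var t = t := by
  induction t with
  | var n => rfl
  | app t u iht ihu => simp only [subst, iht, ihu]
  | sym f => rfl
  | lam t ih =>
    have h : up (var : ℕ → Tm Sig) = var := by funext n; cases n <;> simp [up, lift]
    simp only [subst, h, ih]

theorem subst_closed {t : Tm Sig} (ht : ClosedTm t) (σ : ℕ → Tm Sig) : subst σ t = t := by
  conv_rhs => rw [← subst_var t]
  exact subst_congr t fun n hn => absurd hn (ht n)

/-- The substitution lemma: substitution commutes with contraction of a β-redex. -/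
theorem subst_subst1 (σ : ℕ → Tm Sig) (u t : Tm Sig) :
    subst σ (subst1 u t) = subst1 (subst σ u) (subst (up σ) t) := by
  simp only [subst1, subst_subst]
  congr 1
  funext n
  cases n with
  | zero => rfl
  | succ m =>
    simp only [scons, up, subst, lift_zero_eq_ren, subst_ren]
    exact (subst_var _).symm

/-! ### Left-hand sides as patterns -/

/-- Terms without abstraction in which no variable is applied. `Pat false` collects those
headed by a symbol, `Pat true` additionally allows a bare variable. This is a binary
presentation of algebraic terms, better suited to induction than `appList`. -/
inductive Pat : Bool → Tm Sig → Prop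
  | var (n : ℕ) : Pat true (var n)
  | sym (b : Bool) (f : Sig) : Pat b (sym f)
  | app (b : Bool) {t u : Tm Sig} : Pat false t → Pat true u → Pat b (app t u)

theorem Pat.weaken {b : Bool} {t : Tm Sig} (h : Pat b t) : Pat true t := by
  cases h with
  | var n => exact .var n
  | sym b f => exact .sym _ f
  | app b h₁ h₂ => exact .app _ h₁ h₂

theorem Pat.appList {ts : List (Tm Sig)} : ∀ {h : Tm Sig}, Pat false h →
    (∀ t ∈ ts, Pat true t) → Pat false (appList h ts) := by
  induction ts with
  | nil => intro h hh _; exact hh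
  | cons u us ih =>
    intro h hh hts
    exact ih (.app _ hh (hts u (by simp))) fun t ht => hts t (by simp [ht])

theorem Algebraic.pat {t : Tm Sig} (h : Algebraic t) :
    Pat true t ∧ ((∀ n, t ≠ Tm.var n) → Pat false t) := by
  induction h with
  | var n => exact ⟨Pat.var n, fun h => absurd rfl (h n)⟩
  | symApp f ts _ ih =>
    have h := Pat.appList (Pat.sym false f) fun t ht => (ih t ht).1
    exact ⟨h.weaken, fun _ => h⟩

theorem Pat.subst_ne_lam {t : Tm Sig} (h : Pat false t) (σ : ℕ → Tm Sig) (s : Tm Sig) :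
    subst σ t ≠ lam s := by
  cases h <;> simp [subst]

theorem Pat.subst_ne_redex {t : Tm Sig} (h : Pat false t) (σ : ℕ → Tm Sig) (s u : Tm Sig) :
    subst σ t ≠ Tm.app (lam s) u := by
  cases h with
  | sym b f => simp [subst]
  | app b h₁ h₂ =>
    intro h
    simp only [subst, Tm.app.injEq] at h
    exact h₁.subst_ne_lam σ s h.1

theorem countVar_pos {t : Tm Sig} : ∀ {n : ℕ}, FVar t n → 1 ≤ countVar t n := by
  induction t with
  | var m => intro n h; simp only [FVar] at h; simp [countVar, h]
  | app t u iht ihu =>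
    intro n h
    simp only [countVar]
    rcases h with h | h
    · have := iht h; omega
    · have := ihu h; omega
  | lam t ih => intro n h; exact ih h
  | sym f => intro n h; exact h.elim

end Tm

/-! ### Parallel β-reduction -/

/-- Tait–Martin-Löf parallel β-reduction, without a constructor for closure under
substitution: that closure is derivable, and inversion is simpler without it. -/
inductive Par {Sig : Type} : Tm Sig → Tm Sig → Prop
  | var (n : ℕ) : Par (Tm.var n) (Tm.var n)
  | sym (f : Sig) : Par (Tm.sym f) (Tm.sym f)
  | app {t₁ u₁ t₂ u₂ : Tm Sig} : Par t₁ u₁ → Par t₂ u₂ →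
      Par (Tm.app t₁ t₂) (Tm.app u₁ u₂)
  | abs {t u : Tm Sig} : Par t u → Par (Tm.lam t) (Tm.lam u)
  | beta {t₁ u₁ t₂ u₂ : Tm Sig} : Par t₁ u₁ → Par t₂ u₂ →
      Par (Tm.app (Tm.lam t₁) t₂) (Tm.subst1 u₂ u₁)

namespace Par

open Relation Tm

variable {Sig : Type}

theorem refl (t : Tm Sig) : Par t t := by
  induction t with
  | var n => exact .var n
  | app t u iht ihu => exact .app iht ihu
  | lam t ih => exact .abs ih
  | sym f => exact .sym f

theorem rename {t u : Tm Sig} (h : Par t u) : ∀ ξ : ℕ → ℕ, Par (ren ξ t) (ren ξ u) := by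
  induction h with
  | var n => intro ξ; exact refl _
  | sym f => intro ξ; exact refl _
  | app _ _ ih₁ ih₂ => intro ξ; exact .app (ih₁ ξ) (ih₂ ξ)
  | abs _ ih => intro ξ; exact .abs (ih _)
  | beta _ _ ih₁ ih₂ =>
    intro ξ
    have h := Par.beta (ih₁ (fun n => Nat.casesOn n 0 (fun m => ξ m + 1))) (ih₂ ξ)
    rw [ren_eq_subst (subst1 _ _), subst_subst1, ← ren_eq_subst]
    have e : up (fun n => (Tm.var (ξ n) : Tm Sig)) =
        fun n => Tm.var (Nat.casesOn n 0 (fun m => ξ m + 1)) := by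
      funext n; cases n <;> rfl
    rw [e, ← ren_eq_subst]
    exact h

theorem up {σ τ : ℕ → Tm Sig} (h : ∀ n, Par (σ n) (τ n)) (n : ℕ) :
    Par (Tm.up σ n) (Tm.up τ n) := by
  cases n with
  | zero => exact refl _
  | succ m =>
    simp only [Tm.up, lift_zero_eq_ren]
    exact (h m).rename _

theorem subst {t u : Tm Sig} (h : Par t u) : ∀ {σ τ : ℕ → Tm Sig},
    (∀ n, Par (σ n) (τ n)) → Par (Tm.subst σ t) (Tm.subst τ u) := by
  induction h with
  | var n => intro σ τ h; exact h n
  | sym f => intro σ τ _; exact .sym f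
  | app _ _ ih₁ ih₂ => intro σ τ h; exact .app (ih₁ h) (ih₂ h)
  | abs _ ih => intro σ τ h; exact .abs (ih (up h))
  | beta _ _ ih₁ ih₂ =>
    intro σ τ h
    rw [subst_subst1]
    exact .beta (ih₁ (up h)) (ih₂ h)

theorem subst1 {t t' u u' : Tm Sig} (ht : Par t t') (hu : Par u u') :
    Par (Tm.subst1 u t) (Tm.subst1 u' t') := by
  refine ht.subst fun n => ?_
  cases n with
  | zero => exact hu
  | succ m => exact refl _

theorem of_beta {t u : Tm Sig} (h : Beta t u) : Par t u := by
  induction h with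
  | beta t u => exact .beta (refl t) (refl u)
  | abs _ ih => exact .abs ih
  | appL _ ih => exact .app ih (refl _)
  | appR _ ih => exact .app (refl _) ih
  | substC σ _ ih => exact ih.subst fun n => refl _

theorem to_beta {t u : Tm Sig} (h : Par t u) : ReflTransGen Beta t u := by
  induction h with
  | var n => exact .refl
  | sym f => exact .refl
  | app _ _ ih₁ ih₂ =>
    exact (star_map (fun t => Tm.app t _) (fun _ _ => Beta.appL) ih₁).trans
      (star_map (fun t => Tm.app _ t) (fun _ _ => Beta.appR) ih₂)
  | abs _ ih => exact star_map Tm.lam (fun _ _ => Beta.abs) ih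
  | beta _ _ ih₁ ih₂ =>
    refine ((star_map (fun t => Tm.app (Tm.lam t) _)
      (fun _ _ h => Beta.appL (Beta.abs h)) ih₁).trans
      (star_map (fun t => Tm.app _ t) (fun _ _ => Beta.appR) ih₂)).tail ?_
    exact .beta _ _

theorem diamond {t u : Tm Sig} (h : Par t u) :
    ∀ {v : Tm Sig}, Par t v → ∃ w, Par u w ∧ Par v w := by
  induction h with
  | var n => intro v h; exact ⟨v, h, refl v⟩
  | sym f => intro v h; exact ⟨v, h, refl v⟩
  | abs _ ih =>
    intro v h
    cases h with
    | abs h =>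
      obtain ⟨w, h₁, h₂⟩ := ih h
      exact ⟨_, .abs h₁, .abs h₂⟩
  | app h₁ h₂ ih₁ ih₂ =>
    intro v h
    cases h with
    | app k₁ k₂ =>
      obtain ⟨w₁, a₁, b₁⟩ := ih₁ k₁
      obtain ⟨w₂, a₂, b₂⟩ := ih₂ k₂
      exact ⟨_, .app a₁ a₂, .app b₁ b₂⟩
    | beta k₁ k₂ =>
      obtain ⟨w₁, a₁, b₁⟩ := ih₁ (.abs k₁)
      obtain ⟨w₂, a₂, b₂⟩ := ih₂ k₂
      cases h₁ with
      | abs h₁ =>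
        cases a₁ with
        | abs a₁ =>
          cases b₁ with
          | abs b₁ => exact ⟨_, .beta a₁ a₂, b₁.subst1 b₂⟩
  | beta h₁ h₂ ih₁ ih₂ =>
    intro v h
    cases h with
    | app k₁ k₂ =>
      cases k₁ with
      | abs k₁ =>
        obtain ⟨w₁, a₁, b₁⟩ := ih₁ k₁
        obtain ⟨w₂, a₂, b₂⟩ := ih₂ k₂
        exact ⟨_, a₁.subst1 a₂, .beta b₁ b₂⟩
    | beta k₁ k₂ =>
      obtain ⟨w₁, a₁, b₁⟩ := ih₁ k₁
      obtain ⟨w₂, a₂, b₂⟩ := ih₂ k₂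
      exact ⟨_, a₁.subst1 a₂, b₁.subst1 b₂⟩

theorem eq_of_applicative {c : Tm Sig} (hc : Applicative c) :
    ∀ {w : Tm Sig}, Par c w → w = c := by
  induction hc with
  | var n => intro w h; cases h; rfl
  | sym f => intro w h; cases h; rfl
  | app hc₁ _ ih₁ ih₂ =>
    intro w h
    cases h with
    | app k₁ k₂ => rw [ih₁ k₁, ih₂ k₂]
    | beta _ _ => cases hc₁

/-- A parallel β-step from an instance of a linear pattern takes place inside the
substitution, since no β-redex overlaps the pattern. Linearity is what allows the reducts
of the two sides of an application to be merged into one substitution. -/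
theorem of_pat {b : Bool} {l : Tm Sig} (hl : Pat b l) : LinearTm l →
    ∀ {σ : ℕ → Tm Sig} {u : Tm Sig}, Par (Tm.subst σ l) u →
      ∃ τ : ℕ → Tm Sig, (∀ n, Par (σ n) (τ n)) ∧ u = Tm.subst τ l := by
  induction hl with
  | var n =>
    intro _ σ u h
    refine ⟨Function.update σ n u, fun m => ?_, by simp [Tm.subst]⟩
    by_cases hm : m = n
    · subst hm; simpa [Tm.subst] using h
    · simpa [hm] using refl _
  | sym b f =>
    intro _ σ u h
    cases h
    exact ⟨σ, fun n => refl _, rfl⟩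
  | @app b l₁ l₂ hl₁ hl₂ ih₁ ih₂ =>
    intro hlin σ u h
    have hlin' : ∀ n, countVar l₁ n + countVar l₂ n ≤ 1 := hlin
    simp only [Tm.subst] at h
    generalize he : Tm.subst σ l₁ = s at h
    cases h with
    | app k₁ k₂ =>
      subst he
      obtain ⟨τ₁, h₁, rfl⟩ := ih₁ (fun n => by have := hlin' n; omega) k₁
      obtain ⟨τ₂, h₂, rfl⟩ := ih₂ (fun n => by have := hlin' n; omega) k₂
      classical
      refine ⟨fun n => if FVar l₁ n then τ₁ n else τ₂ n, fun n => ?_, ?_⟩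
      · dsimp only
        split
        · exact h₁ n
        · exact h₂ n
      · simp only [Tm.subst]
        congr 1
        · exact subst_congr _ fun n hn => by simp [hn]
        · refine subst_congr _ fun n hn => ?_
          have hn₁ : ¬ FVar l₁ n := fun h' => by
            have := countVar_pos h'
            have := countVar_pos hn
            have := hlin' n
            omega
          simp [hn₁]
    | beta k₁ k₂ => exact absurd he (hl₁.subst_ne_lam σ _)

end Par

/-! ### Conditional rewriting commutes with β -/

/-- `CondStep` without the constructor for closure under substitution, and with the
endpoints of a rule step given by equations so that inversion applies. -/
inductive CStep {Sig : Type} (Rules : Set (CondRule Sig))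
    (prev : Tm Sig → Tm Sig → Prop) : Tm Sig → Tm Sig → Prop
  | rule {ρ : CondRule Sig} (hρ : ρ ∈ Rules) (σ : ℕ → Tm Sig)
      (hconds : ∀ p ∈ ρ.conds, Joinable prev (Tm.subst σ p.1) (Tm.subst σ p.2))
      {t u : Tm Sig} (ht : t = Tm.subst σ ρ.lhs) (hu : u = Tm.subst σ ρ.rhs) :
      CStep Rules prev t u
  | abs {t u : Tm Sig} : CStep Rules prev t u → CStep Rules prev (Tm.lam t) (Tm.lam u)
  | appL {t u v : Tm Sig} : CStep Rules prev t u →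
      CStep Rules prev (Tm.app t v) (Tm.app u v)
  | appR {t u v : Tm Sig} : CStep Rules prev t u →
      CStep Rules prev (Tm.app v t) (Tm.app v u)

section Commutation

open Relation

variable {Sig : Type} {Rules : Set (CondRule Sig)} {prev : Tm Sig → Tm Sig → Prop}

theorem CStep.substC
    (hprev : ∀ (σ : ℕ → Tm Sig) {t u}, prev t u → prev (Tm.subst σ t) (Tm.subst σ u))
    {t u : Tm Sig} (h : CStep Rules prev t u) :
    ∀ σ : ℕ → Tm Sig, CStep Rules prev (Tm.subst σ t) (Tm.subst σ u) := by
  induction h with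
  | rule hρ τ hconds ht hu =>
    intro σ
    subst ht hu
    refine .rule hρ (fun n => Tm.subst σ (τ n)) (fun p hp => ?_)
      (Tm.subst_subst _ _ _) (Tm.subst_subst _ _ _)
    obtain ⟨v, h₁, h₂⟩ := hconds p hp
    rw [← Tm.subst_subst, ← Tm.subst_subst]
    exact ⟨Tm.subst σ v, star_map (Tm.subst σ) (fun _ _ => hprev σ) h₁,
      star_map (Tm.subst σ) (fun _ _ => hprev σ) h₂⟩
  | abs _ ih => intro σ; exact .abs (ih _)
  | appL _ ih => intro σ; exact .appL (ih _)
  | appR _ ih => intro σ; exact .appR (ih _)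

theorem CStep.of_condStep
    (hprev : ∀ (σ : ℕ → Tm Sig) {t u}, prev t u → prev (Tm.subst σ t) (Tm.subst σ u))
    {t u : Tm Sig} (h : CondStep Rules prev t u) : CStep Rules prev t u := by
  induction h with
  | rule hρ σ hconds => exact .rule hρ σ hconds rfl rfl
  | abs _ ih => exact .abs ih
  | appL _ ih => exact .appL ih
  | appR _ ih => exact .appR ih
  | substC σ _ ih => exact ih.substC hprev σ

theorem CondRel.substC {i : ℕ} (σ : ℕ → Tm Sig) {t u : Tm Sig}
    (h : CondRel Rules i t u) : CondRel Rules i (Tm.subst σ t) (Tm.subst σ u) := by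
  cases i with
  | zero => exact h.elim
  | succ i => exact CondStep.substC σ h

/-- Pointwise reduction of a substitution lifts to reduction of the instance. -/
theorem CondStep.subst_arg (t : Tm Sig) : ∀ {σ τ : ℕ → Tm Sig},
    (∀ n, ReflTransGen (CondStep Rules prev) (σ n) (τ n)) →
      ReflTransGen (CondStep Rules prev) (Tm.subst σ t) (Tm.subst τ t) := by
  induction t with
  | var n => intro σ τ h; exact h n
  | sym f => intro σ τ _; exact .refl
  | app t u iht ihu =>
    intro σ τ h
    exact (star_map (fun t => Tm.app t _) (fun _ _ => CondStep.appL) (iht h)).trans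
      (star_map (fun t => Tm.app _ t) (fun _ _ => CondStep.appR) (ihu h))
  | lam t ih =>
    intro σ τ h
    refine star_map Tm.lam (fun _ _ => CondStep.abs) (ih fun n => ?_)
    cases n with
    | zero => exact .refl
    | succ m =>
      simp only [Tm.up, Tm.lift_zero_eq_ren, Tm.ren_eq_subst]
      exact star_map _ (fun _ _ => CondStep.substC _) (h m)

/-- One stratum of the commutation square: a single rewrite step against a parallel β-step,
closed by a single parallel β-step and many rewrite steps. The hypothesis `hcond` says that
parallel β-reduction of a substitution preserves satisfaction of the conditions. -/
theorem CStep.par_square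
    (hll : LeftLinear Rules)
    (hcond : ∀ ρ ∈ Rules, ∀ p ∈ ρ.conds, ∀ σ τ : ℕ → Tm Sig, (∀ n, Par (σ n) (τ n)) →
      Joinable prev (Tm.subst σ p.1) (Tm.subst σ p.2) →
      Joinable prev (Tm.subst τ p.1) (Tm.subst τ p.2))
    {t u : Tm Sig} (h : Par t u) : ∀ {v : Tm Sig}, CStep Rules prev t v →
      ∃ w, Par v w ∧ ReflTransGen (CondStep Rules prev) u w := by
  have root : ∀ {t u v : Tm Sig}, Par t u → ∀ (ρ : CondRule Sig) (σ : ℕ → Tm Sig), ρ ∈ Rules →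
      (∀ p ∈ ρ.conds, Joinable prev (Tm.subst σ p.1) (Tm.subst σ p.2)) →
      t = Tm.subst σ ρ.lhs → v = Tm.subst σ ρ.rhs →
      ∃ w, Par v w ∧ ReflTransGen (CondStep Rules prev) u w := by
    intro t u v h ρ σ hρ hconds ht hv
    subst ht hv
    obtain ⟨τ, hτ, rfl⟩ := h.of_pat ρ.lhs_alg.pat.1 (hll ρ hρ)
    exact ⟨Tm.subst τ ρ.rhs, (Par.refl _).subst hτ, .single
      (.rule hρ τ fun p hp => hcond ρ hρ p hp σ τ hτ (hconds p hp))⟩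
  induction h with
  | var n =>
    intro v hv
    cases hv with
    | rule hρ σ hconds ht hu => exact root (.var n) _ σ hρ hconds ht hu
  | sym f =>
    intro v hv
    cases hv with
    | rule hρ σ hconds ht hu => exact root (.sym f) _ σ hρ hconds ht hu
  | abs h ih =>
    intro v hv
    cases hv with
    | rule hρ σ hconds ht hu => exact root (.abs h) _ σ hρ hconds ht hu
    | abs k =>
      obtain ⟨w, a, b⟩ := ih k
      exact ⟨_, .abs a, star_map Tm.lam (fun _ _ => CondStep.abs) b⟩
  | app h₁ h₂ ih₁ ih₂ =>
    intro v hv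
    cases hv with
    | rule hρ σ hconds ht hu => exact root (.app h₁ h₂) _ σ hρ hconds ht hu
    | appL k =>
      obtain ⟨w, a, b⟩ := ih₁ k
      exact ⟨_, .app a h₂,
        star_map (fun t => Tm.app t _) (fun _ _ => CondStep.appL) b⟩
    | appR k =>
      obtain ⟨w, a, b⟩ := ih₂ k
      exact ⟨_, .app h₁ a,
        star_map (fun t => Tm.app _ t) (fun _ _ => CondStep.appR) b⟩
  | @beta t₁ u₁ t₂ u₂ h₁ h₂ ih₁ ih₂ =>
    intro v hv
    cases hv with
    | rule hρ σ hconds ht hu => exact root (.beta h₁ h₂) _ σ hρ hconds ht hu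
    | appL k =>
      cases k with
      | @rule ρ hρ σ hconds _ _ ht hu =>
        exact absurd ht.symm ((ρ.lhs_alg.pat.2 ρ.lhs_not_var).subst_ne_lam σ _)
      | abs k =>
        obtain ⟨w, a, b⟩ := ih₁ k
        exact ⟨_, .beta a h₂,
          star_map (Tm.subst1 u₂) (fun _ _ => CondStep.substC _) b⟩
    | appR k =>
      obtain ⟨w, a, b⟩ := ih₂ k
      refine ⟨_, .beta h₁ a, CondStep.subst_arg u₁ fun n => ?_⟩
      cases n with
      | zero => exact b
      | succ m => exact .refl

/-- Tiling of a one-against-many commutation square along the second relation. -/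
theorem square_strip {α : Type} {A B : α → α → Prop}
    (h : ∀ t u v, A t u → B t v → ∃ w, A v w ∧ ReflTransGen B u w)
    {t u v : α} (hA : A t u) (hB : ReflTransGen B t v) :
    ∃ w, A v w ∧ ReflTransGen B u w := by
  induction hB with
  | refl => exact ⟨u, hA, .refl⟩
  | tail _ hb ih =>
    obtain ⟨w, h₁, h₂⟩ := ih
    obtain ⟨w', h₃, h₄⟩ := h _ _ _ h₁ hb
    exact ⟨w', h₃, h₂.trans h₄⟩

/-- Induction on the stratum. A satisfied condition `dσ = c` means `dσ →* c`, as `c` is a closed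
normal form; after `σ ▷ τ`, the square one stratum below closes `dτ ◁ dσ →* c` at `c` itself,
because an applicative term has no proper β-reduct. -/
theorem CondRel.par_square (hll : LeftLinear Rules) (hsc : SemiClosed Rules)
    (hnormal : ∀ ρ ∈ Rules, ∀ p ∈ ρ.conds,
      Tm.ClosedTm p.2 ∧ ∀ u, ¬ CondRew Rules p.2 u) (i : ℕ) :
    ∀ t u v, Par t u → CondRel Rules i t v →
      ∃ w, Par v w ∧ ReflTransGen (CondRel Rules i) u w := by
  induction i with
  | zero => intro t u v _ h; exact h.elim
  | succ i ih =>
    intro t u v hp hv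
    refine CStep.par_square hll ?_ hp
      (CStep.of_condStep (fun σ _ _ => CondRel.substC σ) hv)
    rintro ρ hρ p hp σ τ hστ ⟨x, h₁, h₂⟩
    obtain ⟨hc, hn⟩ := hnormal ρ hρ p hp
    rw [Tm.subst_closed hc] at h₂ ⊢
    have hx : x = p.2 := by
      rcases ReflTransGen.cases_head h₂ with h | ⟨y, hy, _⟩
      · exact h.symm
      · exact absurd ⟨i, hy⟩ (hn y)
    subst hx
    obtain ⟨w, h₃, h₄⟩ := square_strip ih ((Par.refl p.1).subst hστ) h₁
    rw [Par.eq_of_applicative (hsc ρ hρ p hp).1 h₃] at h₄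
    exact ⟨p.2, h₄, .refl⟩

theorem CondRew.par_square (hll : LeftLinear Rules) (hsc : SemiClosed Rules)
    (hnormal : ∀ ρ ∈ Rules, ∀ p ∈ ρ.conds,
      Tm.ClosedTm p.2 ∧ ∀ u, ¬ CondRew Rules p.2 u)
    (t u v : Tm Sig) (hp : Par t u) (hv : CondRew Rules t v) :
    ∃ w, Par v w ∧ ReflTransGen (CondRew Rules) u w := by
  obtain ⟨i, hv⟩ := hv
  obtain ⟨w, h₁, h₂⟩ := CondRel.par_square hll hsc hnormal i t u v hp hv
  exact ⟨w, h₁, star_mono h₂ fun _ _ h => ⟨i, h⟩⟩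

/-! ### The Hindley–Rosen argument -/

theorem beta_star_iff_par_star {t u : Tm Sig} :
    ReflTransGen Beta t u ↔ ReflTransGen Par t u :=
  ⟨fun h => star_mono h fun _ _ => Par.of_beta,
    fun h => by
      induction h with
      | refl => exact .refl
      | tail _ h ih => exact ih.trans h.to_beta⟩

theorem beta_confluent : IsConfluent (Beta : Tm Sig → Tm Sig → Prop) := by
  intro t u v hu hv
  obtain ⟨w, h₁, h₂⟩ := church_rosser (r := Par)
    (fun a b c hb hc => by
      obtain ⟨d, h₁, h₂⟩ := hb.diamond hc
      exact ⟨d, .single h₁, .single h₂⟩)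
    (beta_star_iff_par_star.1 hu) (beta_star_iff_par_star.1 hv)
  exact ⟨w, beta_star_iff_par_star.2 h₁, beta_star_iff_par_star.2 h₂⟩

theorem beta_commutes (hll : LeftLinear Rules) (hsc : SemiClosed Rules)
    (hnormal : ∀ ρ ∈ Rules, ∀ p ∈ ρ.conds,
      Tm.ClosedTm p.2 ∧ ∀ u, ¬ CondRew Rules p.2 u) :
    Commutes Beta (CondRew Rules) := by
  intro s u t hu ht
  rw [beta_star_iff_par_star] at hu
  simp only [beta_star_iff_par_star]
  induction hu with
  | refl => exact ⟨t, ht, .refl⟩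
  | tail _ hb ih =>
    obtain ⟨w, h₁, h₂⟩ := ih
    obtain ⟨w', h₃, h₄⟩ := square_strip (CondRew.par_square hll hsc hnormal) hb h₁
    exact ⟨w', h₄, h₂.tail h₃⟩

/-- The Hindley–Rosen lemma: the union of two confluent commuting relations is confluent. The
diamond property holds for the union of the two reflexive-transitive closures. -/
theorem hindley_rosen {α : Type} {A B : α → α → Prop} (hA : IsConfluent A)
    (hB : IsConfluent B) (hAB : Commutes A B) : IsConfluent (fun t u => A t u ∨ B t u) := by
  have to_r : ∀ {a b}, ReflTransGen (fun t u => A t u ∨ B t u) a b →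
      ReflTransGen (fun t u => ReflTransGen A t u ∨ ReflTransGen B t u) a b := fun h =>
    star_mono h fun _ _ h => h.imp .single .single
  have of_r : ∀ {a b},
      ReflTransGen (fun t u => ReflTransGen A t u ∨ ReflTransGen B t u) a b →
      ReflTransGen (fun t u => A t u ∨ B t u) a b := fun h => by
    induction h with
    | refl => exact .refl
    | tail _ h ih =>
      rcases h with h | h
      · exact ih.trans (star_mono h fun _ _ => Or.inl)
      · exact ih.trans (star_mono h fun _ _ => Or.inr)
  intro t u v hu hv
  obtain ⟨w, h₁, h₂⟩ := church_rosser
    (r := fun t u => ReflTransGen A t u ∨ ReflTransGen B t u)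
    (fun a b c hb hc => by
      rcases hb with hb | hb <;> rcases hc with hc | hc
      · obtain ⟨d, h₁, h₂⟩ := hA a b c hb hc
        exact ⟨d, .single (.inl h₁), .single (.inl h₂)⟩
      · obtain ⟨d, h₁, h₂⟩ := hAB a b c hb hc
        exact ⟨d, .single (.inr h₁), .single (.inl h₂)⟩
      · obtain ⟨d, h₁, h₂⟩ := hAB a c b hc hb
        exact ⟨d, .single (.inl h₂), .single (.inr h₁)⟩
      · obtain ⟨d, h₁, h₂⟩ := hB a b c hb hc
        exact ⟨d, .single (.inr h₁), .single (.inr h₂)⟩)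
    (to_r hu) (to_r hv)
  exact ⟨w, of_r h₁, of_r h₂⟩

end Commutation

/-- If `R` is left-linear and semi-closed and `→_R` is a normal
conditional rewrite relation (in every rule the `ci` are closed terms in
`→_R`-normal form), then confluence of `→_R` implies confluence of `→_{β∪R}`. -/
theorem confluence_beta_union_normal {Sig : Type} (Rules : Set (CondRule Sig))
    (hll : LeftLinear Rules) (hsc : SemiClosed Rules)
    (hnormal : ∀ ρ ∈ Rules, ∀ p ∈ ρ.conds,
      Tm.ClosedTm p.2 ∧ ∀ u, ¬ CondRew Rules p.2 u)
    (hconf : IsConfluent (CondRew Rules)) :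
    IsConfluent (fun t u : Tm Sig => Beta t u ∨ CondRew Rules t u) := by
  exact hindley_rosen beta_confluent hconf (beta_commutes hll hsc hnormal)
end

section
/- Let a : Σ → ℕ be an arity and R an algebraic conditional rewrite system that respects a. If →_R is confluent on AN_a, then →_{β∪R} is confluent on AN_a. -/
/-!
Both kinds of reduction are projected to β-normal forms. If `t` has a β-normal form `n`
that respects `a`, then a β-step `t → u` leaves the normal form unchanged, and a step
`t →_R u` yields a β-normal form `n'` of `u` that respects `a`, with `n →*_R n'`
(`BetaCond.union_project`). Two reducts `u`, `v` of `t` therefore β-reduce to terms which are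
both `R`-reducts of `n`; since `n` is its own normal form, it lies in `AN_a`, and confluence
of `→_R` closes the diagram.

The projection of `→_R` is proved by induction on the level of conditional rewriting. As `t`
is only weakly normalizing, β-reduction is followed along the head strategy: `BetaCond.BN`
is the inductive description of the terms normalized by head reduction applied recursively
to the arguments, and standardization (`BetaCond.St.pb`, `BetaCond.norm_of_isBnf`) shows that
every term with a normal form is of this kind. Along such a derivation a *parallel* rewrite
step is projected (`BetaCond.par_project`); parallelism is what makes the step stable under
the substitution performed by a head β-step, so that left-linearity plays no role.

At an instance `lσ` of a left-hand side, the pattern `l` is algebraic, so its variables are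
never applied to arguments, and the normal form of `lσ` is `lσ'`, where `σ'` normalizes `σ` pointwise. The
same holds for the conditions and for the right-hand side `r`. The conditions, joinable for
`σ` at a lower level, are thus joinable for `σ'` by the induction hypothesis on levels. Since
the head symbol of `l` already has its maximal number of arguments, `lσ'` is never applied in
a term that respects `a`; replacing it by `rσ'` creates no β-redex and no symbol with too
many arguments.
-/

set_option autoImplicit false

namespace BetaCond

open Tm

variable {Sig : Type}

theorem rtg_map {α β : Type} {r : α → α → Prop} {s : β → β → Prop} (f : α → β)
    (hf : ∀ x y, r x y → s (f x) (f y)) {x y : α} (h : Relation.ReflTransGen r x y) :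
    Relation.ReflTransGen s (f x) (f y) := by
  induction h with
  | refl => exact .refl
  | tail _ h ih => exact ih.tail (hf _ _ h)

/-! ### Substitution calculus -/

/-- Lift a renaming under one binder. -/
def upr (ξ : ℕ → ℕ) : ℕ → ℕ
  | 0 => 0
  | n + 1 => ξ n + 1

/-- Renaming of free de Bruijn indices. -/
def ren (ξ : ℕ → ℕ) : Tm Sig → Tm Sig
  | var n => var (ξ n)
  | app t u => app (ren ξ t) (ren ξ u)
  | lam t => lam (ren (upr ξ) t)
  | sym f => sym f

theorem lift_eq_ren (t : Tm Sig) : ∀ d, lift d t =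
    ren (fun n => if n < d then n else n + 1) t := by
  induction t with
  | var n => intro d; simp only [lift, ren]; split <;> rfl
  | app t u iht ihu => intro d; simp [lift, ren, iht, ihu]
  | sym f => intro d; rfl
  | lam t ih =>
    intro d
    simp only [lift, ren, ih]
    congr 2
    funext n
    cases n with
    | zero => simp [upr]
    | succ n => simp only [upr]; split <;> split <;> omega

theorem lift_zero (t : Tm Sig) : lift 0 t = ren Nat.succ t := by
  rw [lift_eq_ren]; rfl

theorem ren_ren (t : Tm Sig) : ∀ ξ ζ : ℕ → ℕ, ren ξ (ren ζ t) = ren (fun n => ξ (ζ n)) t := by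
  induction t with
  | var n => intro ξ ζ; rfl
  | app t u iht ihu => intro ξ ζ; simp [ren, iht, ihu]
  | sym f => intro ξ ζ; rfl
  | lam t ih =>
    intro ξ ζ
    simp only [ren, ih]
    congr 2
    funext n
    cases n <;> rfl

theorem subst_ren (t : Tm Sig) : ∀ (σ : ℕ → Tm Sig) (ζ : ℕ → ℕ),
    subst σ (ren ζ t) = subst (fun n => σ (ζ n)) t := by
  induction t with
  | var n => intro ξ ζ; rfl
  | app t u iht ihu => intro ξ ζ; simp [ren, subst, iht, ihu]
  | sym f => intro ξ ζ; rfl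
  | lam t ih =>
    intro ξ ζ
    simp only [ren, subst, ih]
    congr 2
    funext n
    cases n <;> rfl

theorem ren_up (ξ : ℕ → ℕ) (σ : ℕ → Tm Sig) :
    (fun n => ren (upr ξ) (up σ n)) = up (fun n => ren ξ (σ n)) := by
  funext n
  cases n with
  | zero => rfl
  | succ n => simp only [up, lift_zero, ren_ren]; rfl

theorem ren_subst (t : Tm Sig) : ∀ (ξ : ℕ → ℕ) (σ : ℕ → Tm Sig),
    ren ξ (subst σ t) = subst (fun n => ren ξ (σ n)) t := by
  induction t with
  | var n => intro ξ ζ; rfl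
  | app t u iht ihu => intro ξ ζ; simp [ren, subst, iht, ihu]
  | sym f => intro ξ ζ; rfl
  | lam t ih => intro ξ σ; simp only [ren, subst, ih, ren_up]

theorem up_subst (τ σ : ℕ → Tm Sig) :
    (fun n => subst (up τ) (up σ n)) = up (fun n => subst τ (σ n)) := by
  funext n
  cases n with
  | zero => rfl
  | succ n => simp only [up, lift_zero, subst_ren, ren_subst]

theorem subst_subst (t : Tm Sig) : ∀ τ σ : ℕ → Tm Sig,
    subst τ (subst σ t) = subst (fun n => subst τ (σ n)) t := by
  induction t with
  | var n => intro ξ ζ; rfl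
  | app t u iht ihu => intro ξ ζ; simp [subst, iht, ihu]
  | sym f => intro ξ ζ; rfl
  | lam t ih => intro τ σ; simp only [subst, ih, up_subst]

theorem ren_eq_subst (t : Tm Sig) : ∀ ξ : ℕ → ℕ, ren ξ t = subst (fun n => var (ξ n)) t := by
  induction t with
  | var n => intro ξ; rfl
  | app t u iht ihu => intro ξ; simp [ren, subst, iht, ihu]
  | sym f => intro ξ; rfl
  | lam t ih =>
    intro ξ
    simp only [ren, subst, ih]
    congr 2
    funext n
    cases n <;> rfl

theorem subst_var (t : Tm Sig) : subst var t = t := by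
  induction t with
  | var n => rfl
  | app t u iht ihu => simp [subst, iht, ihu]
  | sym f => rfl
  | lam t ih =>
    have : up (var : ℕ → Tm Sig) = var := by
      funext n
      cases n <;> rfl
    simp only [subst, this, ih]

theorem subst_subst1 (σ : ℕ → Tm Sig) (u t : Tm Sig) :
    subst σ (subst1 u t) = subst1 (subst σ u) (subst (up σ) t) := by
  simp only [subst1, subst_subst]
  congr 1
  funext n
  cases n with
  | zero => rfl
  | succ n =>
    simp only [scons, up, lift_zero, subst_ren, subst]
    exact (subst_var _).symm

theorem ren_subst1 (ξ : ℕ → ℕ) (u t : Tm Sig) :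
    ren ξ (subst1 u t) = subst1 (ren ξ u) (ren (upr ξ) t) := by
  simp only [subst1, ren_subst, subst_ren]
  congr 1
  funext n
  cases n <;> rfl

/-- `(up σ, up τ)` is pointwise related as soon as `(σ, τ)` is, for a relation that is
closed under renaming and reflexive on variables. -/
theorem up_rel {R : Tm Sig → Tm Sig → Prop} (hv : ∀ n, R (var n) (var n))
    (hr : ∀ (ξ : ℕ → ℕ) {t u}, R t u → R (ren ξ t) (ren ξ u))
    {σ τ : ℕ → Tm Sig} (h : ∀ n, R (σ n) (τ n)) : ∀ n, R (up σ n) (up τ n)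
  | 0 => hv 0
  | n + 1 => by simp only [up, lift_zero]; exact hr _ (h n)

theorem scons_rel {R : Tm Sig → Tm Sig → Prop} (hv : ∀ n, R (var n) (var n))
    {u v : Tm Sig} (h : R u v) : ∀ n, R (scons u var n) (scons v var n)
  | 0 => h
  | n + 1 => hv n

/-! ### Parallel β-reduction and head reduction -/

/-- Parallel β-reduction, without the closure under substitution as a constructor:
every derivation is then directed by the shape of the source term. -/
inductive PB : Tm Sig → Tm Sig → Prop
  | var (n : ℕ) : PB (var n) (var n)
  | sym (f : Sig) : PB (sym f) (sym f)
  | app {t₁ u₁ t₂ u₂ : Tm Sig} : PB t₁ u₁ → PB t₂ u₂ → PB (app t₁ t₂) (app u₁ u₂)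
  | lam {t u : Tm Sig} : PB t u → PB (lam t) (lam u)
  | beta {t₁ u₁ t₂ u₂ : Tm Sig} : PB t₁ u₁ → PB t₂ u₂ →
      PB (app (lam t₁) t₂) (subst1 u₂ u₁)

theorem PB.refl (t : Tm Sig) : PB t t := by
  induction t with
  | var n => exact .var n
  | app t u iht ihu => exact .app iht ihu
  | sym f => exact .sym f
  | lam t ih => exact .lam ih

theorem PB.ren {t u : Tm Sig} (h : PB t u) : ∀ ξ, PB (ren ξ t) (ren ξ u) := by
  induction h with
  | var n => intro ξ; exact .var _
  | sym f => intro ξ; exact .sym f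
  | app _ _ ih₁ ih₂ => intro ξ; exact .app (ih₁ ξ) (ih₂ ξ)
  | lam _ ih => intro ξ; exact .lam (ih _)
  | beta _ _ ih₁ ih₂ => intro ξ; rw [ren_subst1]; exact .beta (ih₁ _) (ih₂ _)

theorem PB.subst {t u : Tm Sig} (h : PB t u) : ∀ σ τ : ℕ → Tm Sig, (∀ n, PB (σ n) (τ n)) →
    PB (Tm.subst σ t) (Tm.subst τ u) := by
  induction h with
  | var n => intro σ τ h; exact h n
  | sym f => intro _ _ _; exact .sym f
  | app _ _ ih₁ ih₂ => intro σ τ h; exact .app (ih₁ _ _ h) (ih₂ _ _ h)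
  | lam _ ih => intro σ τ h; exact .lam (ih _ _ (up_rel .var (fun ξ _ _ h => h.ren ξ) h))
  | beta _ _ ih₁ ih₂ =>
    intro σ τ h
    rw [subst_subst1]
    exact .beta (ih₁ _ _ (up_rel .var (fun ξ _ _ h => h.ren ξ) h)) (ih₂ _ _ h)

theorem PB.of_beta {t u : Tm Sig} (h : Beta t u) : PB t u := by
  induction h with
  | beta t u => exact .beta (.refl t) (.refl u)
  | abs _ ih => exact .lam ih
  | appL _ ih => exact .app ih (.refl _)
  | appR _ ih => exact .app (.refl _) ih
  | substC σ _ ih => exact ih.subst σ σ (fun n => .refl _)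

theorem head_beta {t u : Tm Sig} (h : HeadAux t u) : Beta t u := by
  induction h with
  | beta b a => exact .beta b a
  | app v _ ih => exact .appL ih

theorem head_ren {t u : Tm Sig} (h : HeadAux t u) (ξ : ℕ → ℕ) :
    HeadAux (ren ξ t) (ren ξ u) := by
  induction h with
  | beta b a => rw [ren_subst1]; exact .beta _ _
  | app v _ ih => exact .app _ ih

theorem head_subst {t u : Tm Sig} (h : HeadAux t u) (σ : ℕ → Tm Sig) :
    HeadAux (subst σ t) (subst σ u) := by
  induction h with
  | beta b a => rw [subst_subst1]; exact .beta _ _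
  | app v _ ih => exact .app _ ih

theorem head_det {t u v : Tm Sig} (h : HeadAux t u) : HeadAux t v → u = v := by
  intro h'
  induction h generalizing v with
  | beta b a =>
    cases h' with
    | beta => rfl
    | app _ h => cases h
  | app w h ih =>
    cases h' with
    | beta => cases h
    | app _ h => rw [ih h]

/-- Iterated head reduction along an application spine. -/
abbrev Heads : Tm Sig → Tm Sig → Prop := Relation.ReflTransGen HeadAux

theorem Heads.app {t u : Tm Sig} (h : Heads t u) (v : Tm Sig) : Heads (app t v) (app u v) :=
  rtg_map (fun t => Tm.app t v) (fun _ _ h => .app v h) h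

theorem Heads.ren {t u : Tm Sig} (h : Heads t u) (ξ : ℕ → ℕ) : Heads (ren ξ t) (ren ξ u) :=
  rtg_map (BetaCond.ren ξ) (fun _ _ h => head_ren h ξ) h

theorem Heads.subst {t u : Tm Sig} (h : Heads t u) (σ : ℕ → Tm Sig) :
    Heads (subst σ t) (subst σ u) :=
  rtg_map _ (fun _ _ h => head_subst h σ) h

/-! ### Standardization -/

/-- Standard reduction: `t` first head-reduces to a term with the outermost constructor
of the target, and the immediate subterms are then reduced in a standard way. -/
inductive St : Tm Sig → Tm Sig → Prop
  | var {t : Tm Sig} (n : ℕ) : Heads t (var n) → St t (var n)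
  | sym {t : Tm Sig} (f : Sig) : Heads t (sym f) → St t (sym f)
  | app {t t₁ u₁ t₂ u₂ : Tm Sig} : Heads t (app t₁ t₂) → St t₁ u₁ → St t₂ u₂ →
      St t (app u₁ u₂)
  | lam {t t' u : Tm Sig} : Heads t (lam t') → St t' u → St t (lam u)

theorem St.refl (t : Tm Sig) : St t t := by
  induction t with
  | var n => exact .var n .refl
  | app t u iht ihu => exact .app .refl iht ihu
  | sym f => exact .sym f .refl
  | lam t ih => exact .lam .refl ih

theorem St.heads {t t' u : Tm Sig} (h : Heads t t') (h' : St t' u) : St t u := by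
  cases h' with
  | var n h₁ => exact .var n (h.trans h₁)
  | sym f h₁ => exact .sym f (h.trans h₁)
  | app h₁ h₂ h₃ => exact .app (h.trans h₁) h₂ h₃
  | lam h₁ h₂ => exact .lam (h.trans h₁) h₂

theorem St.ren {t u : Tm Sig} (h : St t u) : ∀ ξ, St (ren ξ t) (ren ξ u) := by
  induction h with
  | var n h => intro ξ; exact .var _ (h.ren ξ)
  | sym f h => intro ξ; exact .sym f (h.ren ξ)
  | app h _ _ ih₁ ih₂ => intro ξ; exact .app (h.ren ξ) (ih₁ ξ) (ih₂ ξ)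
  | lam h _ ih => intro ξ; exact .lam (h.ren ξ) (ih _)

theorem St.subst {t u : Tm Sig} (h : St t u) : ∀ σ τ : ℕ → Tm Sig, (∀ n, St (σ n) (τ n)) →
    St (Tm.subst σ t) (Tm.subst τ u) := by
  induction h with
  | var n h => intro σ τ hs; exact St.heads (h.subst σ) (hs n)
  | sym f h => intro σ _ _; exact .sym f (h.subst σ)
  | app h _ _ ih₁ ih₂ => intro σ τ hs; exact .app (h.subst σ) (ih₁ _ _ hs) (ih₂ _ _ hs)
  | lam h _ ih =>
    intro σ τ hs
    exact .lam (h.subst σ) (ih _ _ (up_rel (fun n => .refl _) (fun ξ _ _ h => h.ren ξ) hs))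

/-- The key step of standardization: a β-step after a standard reduction can be
absorbed into it. -/
theorem St.pb {u v : Tm Sig} (h : PB u v) : ∀ {t : Tm Sig}, St t u → St t v := by
  induction h with
  | var n => intro t h; exact h
  | sym f => intro t h; exact h
  | app _ _ ih₁ ih₂ =>
    intro t h
    cases h with
    | app h h₁ h₂ => exact .app h (ih₁ h₁) (ih₂ h₂)
  | lam _ ih =>
    intro t h
    cases h with
    | lam h h₁ => exact .lam h (ih h₁)
  | beta _ _ ih₁ ih₂ =>
    intro t h
    cases h with
    | app h h₁ h₂ =>
      cases h₁ with
      | lam h₃ h₄ =>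
        refine St.heads ((h.trans (h₃.app _)).tail (.beta _ _)) ?_
        exact (ih₁ h₄).subst _ _ (scons_rel (fun n => .refl _) (ih₂ h₂))

theorem St.of_betas {t u : Tm Sig} (h : Relation.ReflTransGen Beta t u) : St t u := by
  induction h with
  | refl => exact .refl t
  | tail _ h ih => exact St.pb (.of_beta h) ih

/-! ### Inductive β-normalization -/

/-- `BN h b t n`: the head reduction strategy, applied recursively to the arguments,
normalizes `t` to `n`, with a derivation of height at most `h`. For `b = true`, the
term `t` is moreover neutral: a variable or a symbol applied to arguments. -/
inductive BN : ℕ → Bool → Tm Sig → Tm Sig → Prop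
  | var (h n : ℕ) : BN h true (var n) (var n)
  | sym (h : ℕ) (f : Sig) : BN h true (sym f) (sym f)
  | app {h h₁ h₂ : ℕ} {t u s v : Tm Sig} : BN h₁ true t u → BN h₂ false s v →
      h₁ < h → h₂ < h → BN h true (app t s) (app u v)
  | emb {h h₁ : ℕ} {t u : Tm Sig} : BN h₁ true t u → h₁ < h → BN h false t u
  | lam {h h₁ : ℕ} {t u : Tm Sig} : BN h₁ false t u → h₁ < h → BN h false (lam t) (lam u)
  | head {h h₁ : ℕ} {t t' u : Tm Sig} : HeadAux t t' → BN h₁ false t' u → h₁ < h →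
      BN h false t u

/-- `Norm t n`: head reduction, applied recursively to the arguments, normalizes `t`
to `n`. -/
def Norm (t n : Tm Sig) : Prop := ∃ h, BN h false t n

/-- `Neut t n`: `t` is neutral, and its arguments normalize to those of `n`. -/
def Neut (t n : Tm Sig) : Prop := ∃ h, BN h true t n

theorem Neut.norm {t n : Tm Sig} : Neut t n → Norm t n :=
  fun ⟨h, H⟩ => ⟨h + 1, .emb H h.lt_succ_self⟩

theorem Neut.app {t n s m : Tm Sig} : Neut t n → Norm s m → Neut (app t s) (app n m) :=
  fun ⟨h, H⟩ ⟨h', H'⟩ => ⟨max h h' + 1, .app H H' (by omega) (by omega)⟩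

theorem Norm.lam {t n : Tm Sig} : Norm t n → Norm (lam t) (lam n) :=
  fun ⟨h, H⟩ => ⟨h + 1, .lam H h.lt_succ_self⟩

theorem Norm.head {t t' n : Tm Sig} (h : HeadAux t t') : Norm t' n → Norm t n :=
  fun ⟨k, H⟩ => ⟨k + 1, .head h H k.lt_succ_self⟩

theorem Norm.heads {t t' n : Tm Sig} (h : Heads t t') (H : Norm t' n) : Norm t n := by
  induction h using Relation.ReflTransGen.head_induction_on with
  | refl => exact H
  | head h _ ih => exact ih.head h

theorem not_head_of_neut {h : ℕ} {b : Bool} {t n : Tm Sig} (H : BN h b t n) (hb : b = true) :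
    ∀ t', ¬ HeadAux t t' := by
  induction H with
  | var | sym => intro t' h; cases h
  | app H₁ _ _ _ ih₁ _ =>
    intro t' h
    cases h with
    | beta => cases H₁
    | app _ h => exact ih₁ rfl _ h
  | emb | lam | head => cases hb

theorem BN.det {h : ℕ} {b : Bool} {t n : Tm Sig} (H : BN h b t n) :
    ∀ {h' : ℕ} {n' : Tm Sig}, BN h' b t n' → n = n' := by
  induction H with
  | var | sym => intro h' n' H'; cases H'; rfl
  | app _ _ _ _ ih₁ ih₂ =>
    intro h' n' H'
    cases H' with
    | app H₁ H₂ => rw [ih₁ H₁, ih₂ H₂]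
  | emb H _ ih =>
    intro h' n' H'
    cases H' with
    | emb H₁ => exact ih H₁
    | lam => cases H
    | head hd => exact absurd hd (not_head_of_neut H rfl _)
  | lam _ _ ih =>
    intro h' n' H'
    cases H' with
    | emb H₁ => cases H₁
    | lam H₁ => rw [ih H₁]
    | head hd => cases hd
  | head hd _ _ ih =>
    intro h' n' H'
    cases H' with
    | emb H₁ => exact absurd hd (not_head_of_neut H₁ rfl _)
    | lam => cases hd
    | head hd' H₁ =>
      cases head_det hd hd'
      exact ih H₁

theorem BN.betas {h : ℕ} {b : Bool} {t n : Tm Sig} (H : BN h b t n) :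
    Relation.ReflTransGen Beta t n := by
  induction H with
  | var | sym => exact .refl
  | app _ _ _ _ ih₁ ih₂ =>
    exact (rtg_map (fun t => Tm.app t _) (fun _ _ h => .appL h) ih₁).trans
      (rtg_map (fun t => Tm.app _ t) (fun _ _ h => .appR h) ih₂)
  | emb _ _ ih => exact ih
  | lam _ _ ih => exact rtg_map _ (fun _ _ h => .abs h) ih
  | head hd _ _ ih => exact ih.head (head_beta hd)

theorem BN.exists_neut {h : ℕ} {b : Bool} {t n : Tm Sig} (H : BN h b t n)
    (hn : ∀ m, n ≠ Tm.lam m) : ∃ t', Heads t t' ∧ Neut t' n := by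
  induction H with
  | var h n => exact ⟨_, .refl, h, .var h n⟩
  | sym h f => exact ⟨_, .refl, h, .sym h f⟩
  | app H₁ H₂ h₁ h₂ => exact ⟨_, .refl, _, .app H₁ H₂ h₁ h₂⟩
  | emb H _ _ => exact ⟨_, .refl, _, H⟩
  | lam => exact absurd rfl (hn _)
  | head hd _ _ ih =>
    obtain ⟨t', h, H⟩ := ih hn
    exact ⟨t', h.head hd, H⟩

theorem St.norm {t n : Tm Sig} (h : St t n) : BetaNormal n → Norm t n := by
  induction h with
  | var n h => intro _; exact Norm.heads h (Neut.norm ⟨0, .var 0 n⟩)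
  | sym f h => intro _; exact Norm.heads h (Neut.norm ⟨0, .sym 0 f⟩)
  | app h _ _ ih₁ ih₂ =>
    intro hn
    obtain ⟨k, H₁⟩ := ih₁ (fun _ h => hn _ (.appL h))
    obtain ⟨t', h', H'⟩ := H₁.exists_neut (by rintro m rfl; exact hn _ (.beta _ _))
    exact Norm.heads (h.trans (h'.app _)) (H'.app (ih₂ fun _ h => hn _ (.appR h))).norm
  | lam h _ ih => intro hn; exact Norm.heads h (ih fun _ h => hn _ (.abs h)).lam

/-- Head reduction is normalizing: it finds every β-normal form. -/
theorem norm_of_isBnf {t n : Tm Sig} (h : IsBnf t n) : Norm t n := (St.of_betas h.1).norm h.2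

theorem head_pb {t t₁ t' : Tm Sig} (h : HeadAux t t₁) (hp : PB t t') :
    (∃ t₁', HeadAux t' t₁' ∧ PB t₁ t₁') ∨ PB t₁ t' := by
  induction h generalizing t' with
  | beta b a =>
    cases hp with
    | app h₁ h₂ =>
      cases h₁ with
      | lam h₁ => exact .inl ⟨_, .beta _ _, h₁.subst _ _ (scons_rel .var h₂)⟩
    | beta h₁ h₂ => exact .inr (h₁.subst _ _ (scons_rel .var h₂))
  | app v h ih =>
    cases hp with
    | app h₁ h₂ =>
      rcases ih h₁ with ⟨t₁', h, h'⟩ | h'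
      · exact .inl ⟨_, .app _ h, .app h' h₂⟩
      · exact .inr (.app h' h₂)
    | beta => cases h

/-- β-reduction preserves the normal form computed by head reduction. -/
theorem BN.pb {h : ℕ} {b : Bool} {t n : Tm Sig} (H : BN h b t n) :
    ∀ {t'}, PB t t' → ∃ h', BN h' b t' n := by
  induction H with
  | var h n => intro t' hp; cases hp; exact ⟨h, .var h n⟩
  | sym h f => intro t' hp; cases hp; exact ⟨h, .sym h f⟩
  | app H₁ _ _ _ ih₁ ih₂ =>
    intro t' hp
    cases hp with
    | app h₁ h₂ => exact Neut.app (ih₁ h₁) (ih₂ h₂)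
    | beta => cases H₁
  | emb _ _ ih => intro t' hp; exact Neut.norm (ih hp)
  | lam _ _ ih =>
    intro t' hp
    cases hp with
    | lam hp => exact Norm.lam (ih hp)
  | head hd _ _ ih =>
    intro t' hp
    rcases head_pb hd hp with ⟨_, hh, hq⟩ | hq
    · exact Norm.head hh (ih hq)
    · exact ih hq

/-! ### Algebraic patterns -/

/-- Non-variable algebraic terms `f p₁ … pₙ`, built one argument at a time. -/
inductive SPat : Tm Sig → Prop
  | sym (f : Sig) : SPat (sym f)
  | appv {p : Tm Sig} (n : ℕ) : SPat p → SPat (app p (var n))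
  | app {p q : Tm Sig} : SPat p → SPat q → SPat (app p q)

theorem sPat_appList {ts : List (Tm Sig)} (h : ∀ t ∈ ts, (∃ n, t = var n) ∨ SPat t) :
    ∀ {p : Tm Sig}, SPat p → SPat (appList p ts) := by
  induction ts with
  | nil => intro p hp; exact hp
  | cons t ts ih =>
    intro p hp
    refine ih (fun t ht => h t (List.mem_cons_of_mem _ ht)) ?_
    rcases h t List.mem_cons_self with ⟨n, rfl⟩ | ht
    · exact .appv n hp
    · exact .app hp ht

theorem pat_of_algebraic {t : Tm Sig} (h : Algebraic t) : (∃ n, t = var n) ∨ SPat t := by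
  induction h with
  | var n => exact .inl ⟨n, rfl⟩
  | symApp f ts _ ih => exact .inr (sPat_appList ih (.sym f))

theorem SPat.lhs (ρ : CondRule Sig) : SPat ρ.lhs := by
  rcases pat_of_algebraic ρ.lhs_alg with ⟨n, h⟩ | h
  · exact absurd h (ρ.lhs_not_var n)
  · exact h

theorem SPat.ne_lam {p : Tm Sig} (hp : SPat p) (σ : ℕ → Tm Sig) (t : Tm Sig) :
    Tm.subst σ p ≠ lam t := by
  cases hp <;> simp [subst]

theorem SPat.ne_var {p : Tm Sig} (hp : SPat p) (σ : ℕ → Tm Sig) (n : ℕ) :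
    Tm.subst σ p ≠ var n := by
  cases hp <;> simp [subst]

theorem SPat.not_head {p : Tm Sig} (hp : SPat p) (σ : ℕ → Tm Sig) :
    ∀ t, ¬ HeadAux (Tm.subst σ p) t := by
  have key : ∀ {p q t : Tm Sig}, SPat p → (∀ t, ¬ HeadAux (Tm.subst σ p) t) →
      ¬ HeadAux (Tm.app (Tm.subst σ p) q) t := by
    intro p q t hp ih h
    generalize hs : Tm.subst σ p = s at h ih
    cases h with
    | beta => exact hp.ne_lam σ _ hs
    | app _ h => exact ih _ h
  induction hp with
  | sym f => intro t h; cases h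
  | appv n hp ih => intro t; exact key hp ih
  | app hp _ ih _ => intro t; exact key hp ih

theorem SPat.neut {p : Tm Sig} (hp : SPat p) {σ σ' : ℕ → Tm Sig}
    (h : ∀ x, FVar p x → Norm (σ x) (σ' x)) : Neut (Tm.subst σ p) (Tm.subst σ' p) := by
  induction hp with
  | sym f => exact ⟨0, .sym 0 f⟩
  | appv n _ ih => exact (ih fun x hx => h x (.inl hx)).app (h n (.inr rfl))
  | app _ _ ih₁ ih₂ =>
    exact (ih₁ fun x hx => h x (.inl hx)).app (ih₂ fun x hx => h x (.inr hx)).norm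

theorem SPat.toNeut {p : Tm Sig} (hp : SPat p) {σ : ℕ → Tm Sig} {h : ℕ} {n : Tm Sig}
    (H : BN h false (Tm.subst σ p) n) : ∃ h', h' < h ∧ BN h' true (Tm.subst σ p) n := by
  generalize hs : Tm.subst σ p = s at H
  cases H with
  | emb H hl => exact ⟨_, hl, H⟩
  | lam => exact absurd hs (hp.ne_lam _ _)
  | head hd => subst hs; exact absurd hd (hp.not_head σ _)

/-- If an instance of an algebraic pattern normalizes, so do the instances of its
variables, with strictly smaller derivations. -/
theorem SPat.vars {p : Tm Sig} (hp : SPat p) {σ : ℕ → Tm Sig} : ∀ {h : ℕ} {n : Tm Sig},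
    BN h true (Tm.subst σ p) n → ∀ x, FVar p x → ∃ h' m, h' < h ∧ BN h' false (σ x) m := by
  induction hp with
  | sym f => intro h n _ x hx; exact hx.elim
  | appv k _ ih =>
    intro h n H x hx
    cases H with
    | app H₁ H₂ l₁ l₂ =>
      rcases hx with hx | hx
      · obtain ⟨h', m, l, H⟩ := ih H₁ x hx
        exact ⟨h', m, by omega, H⟩
      · cases hx
        exact ⟨_, _, l₂, H₂⟩
  | app _ hq ih₁ ih₂ =>
    intro h n H x hx
    cases H with
    | app H₁ H₂ l₁ l₂ =>
      rcases hx with hx | hx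
      · obtain ⟨h', m, l, H⟩ := ih₁ H₁ x hx
        exact ⟨h', m, by omega, H⟩
      · obtain ⟨k, lk, Hk⟩ := hq.toNeut H₂
        obtain ⟨h', m, l, H⟩ := ih₂ Hk x hx
        exact ⟨h', m, by omega, H⟩

/-! ### Arities -/

/-- `RA a k t`: the term `t`, when applied to `k` further arguments, respects the
arity `a`. -/
def RA (a : Sig → ℕ) : ℕ → Tm Sig → Prop
  | _, var _ => True
  | k, app t s => RA a (k + 1) t ∧ RA a 0 s
  | _, lam t => RA a 0 t
  | k, sym f => k ≤ a f

theorem Subterm.trans {r s t : Tm Sig} (h : Subterm r s) (h' : Subterm s t) : Subterm r t := by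
  induction h' with
  | refl => exact h
  | appL _ ih => exact .appL ih
  | appR _ ih => exact .appR ih
  | lam _ ih => exact .lam ih

theorem subterm_appList (ts : List (Tm Sig)) : ∀ t, Subterm t (appList t ts) := by
  induction ts with
  | nil => exact fun t => .refl t
  | cons u ts ih => exact fun t => Subterm.trans (.appL (.refl t)) (ih (Tm.app t u))

theorem RespectsArity.sub {a : Sig → ℕ} {s t : Tm Sig} (h : RespectsArity a t)
    (hs : Subterm s t) : RespectsArity a s :=
  fun f ts hf => h f ts (Subterm.trans hf hs)

theorem ra_of_respects {a : Sig → ℕ} (t : Tm Sig) : ∀ ts : List (Tm Sig),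
    RespectsArity a (appList t ts) → RA a ts.length t := by
  induction t with
  | var n => intro ts h; trivial
  | sym f => intro ts h; exact h f ts (.refl _)
  | app t s iht ihs =>
    intro ts h
    exact ⟨iht (s :: ts) h,
      ihs [] (RespectsArity.sub h (Subterm.trans (.appR (.refl s)) (subterm_appList ts _)))⟩
  | lam t ih =>
    intro ts h
    exact ih [] (RespectsArity.sub h (Subterm.trans (.lam (.refl t)) (subterm_appList ts _)))

theorem RA.appList {a : Sig → ℕ} (ts : List (Tm Sig)) : ∀ {k : ℕ} {t : Tm Sig},
    RA a k (appList t ts) → RA a (k + ts.length) t := by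
  induction ts with
  | nil => intro k t h; exact h
  | cons u ts ih =>
    intro k t h
    have := (ih (t := Tm.app t u) h).1
    rwa [List.length_cons, ← Nat.add_assoc]

theorem SPat.ra_vars {a : Sig → ℕ} {p : Tm Sig} (hp : SPat p) {σ : ℕ → Tm Sig} :
    ∀ {k}, RA a k (Tm.subst σ p) → ∀ x, FVar p x → RA a 0 (σ x) := by
  induction hp with
  | sym f => intro k _ x hx; exact hx.elim
  | appv n _ ih =>
    rintro k ⟨h₁, h₂⟩ x (hx | hx)
    · exact ih h₁ x hx
    · cases hx; exact h₂
  | app _ _ ih₁ ih₂ =>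
    rintro k ⟨h₁, h₂⟩ x (hx | hx)
    · exact ih₁ h₁ x hx
    · exact ih₂ h₂ x hx

theorem SPat.ra_subst {a : Sig → ℕ} {p : Tm Sig} (hp : SPat p) {σ : ℕ → Tm Sig} :
    ∀ {k}, RA a k p → (∀ x, FVar p x → RA a 0 (σ x)) → RA a k (Tm.subst σ p) := by
  induction hp with
  | sym f => intro k h _; exact h
  | appv n _ ih =>
    rintro k ⟨h₁, _⟩ hx
    exact ⟨ih h₁ fun x h => hx x (.inl h), hx n (.inr rfl)⟩
  | app _ _ ih₁ ih₂ =>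
    rintro k ⟨h₁, h₂⟩ hx
    exact ⟨ih₁ h₁ fun x h => hx x (.inl h), ih₂ h₂ fun x h => hx x (.inr h)⟩

theorem subst_appList (σ : ℕ → Tm Sig) (ts : List (Tm Sig)) : ∀ t : Tm Sig,
    subst σ (appList t ts) = appList (subst σ t) (ts.map (subst σ)) := by
  induction ts with
  | nil => exact fun t => rfl
  | cons u ts ih => exact fun t => ih (Tm.app t u)

/-- An instance of a left-hand side is already applied to as many arguments as its head
symbol allows. -/
theorem lhs_saturated {a : Sig → ℕ} {ρ : CondRule Sig} (hρ : RuleRespectsArity a ρ)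
    {σ : ℕ → Tm Sig} {k : ℕ} (h : RA a k (subst σ ρ.lhs)) : k = 0 := by
  obtain ⟨_, _, _, f, ls, hl, hlen⟩ := hρ
  rw [hl, subst_appList] at h
  have : k + (ls.map (subst σ)).length ≤ a f := RA.appList _ h
  rw [List.length_map] at this
  omega

theorem norm_alg {t : Tm Sig} (ht : Algebraic t) {σ σ' : ℕ → Tm Sig}
    (h : ∀ x, FVar t x → Norm (σ x) (σ' x)) : Norm (subst σ t) (subst σ' t) := by
  rcases pat_of_algebraic ht with ⟨n, rfl⟩ | hp
  · exact h n rfl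
  · exact (hp.neut h).norm

theorem ra_alg {a : Sig → ℕ} {t : Tm Sig} (ht : Algebraic t) (hr : RespectsArity a t)
    {σ : ℕ → Tm Sig} (h : ∀ x, FVar t x → RA a 0 (σ x)) : RA a 0 (subst σ t) := by
  rcases pat_of_algebraic ht with ⟨n, rfl⟩ | hp
  · exact h n rfl
  · exact hp.ra_subst (ra_of_respects t [] hr) h

/-! ### Conditional rewriting and its nested parallelization -/

/-- The instance `σ` of the rule `ρ` may be used for a step of level `i + 1`. -/
def Cnd (Rules : Set (CondRule Sig)) (i : ℕ) (ρ : CondRule Sig) (σ : ℕ → Tm Sig) : Prop :=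
  ρ ∈ Rules ∧ ∀ p ∈ ρ.conds, Joinable (CondRel Rules i) (subst σ p.1) (subst σ p.2)

theorem condRel_subst {Rules : Set (CondRule Sig)} (i : ℕ) (θ : ℕ → Tm Sig) {t u : Tm Sig}
    (h : CondRel Rules i t u) : CondRel Rules i (subst θ t) (subst θ u) := by
  cases i with
  | zero => exact h
  | succ i => exact CondStep.substC θ h

theorem Cnd.comp {Rules : Set (CondRule Sig)} {i : ℕ} {ρ : CondRule Sig} {σ : ℕ → Tm Sig}
    (h : Cnd Rules i ρ σ) (θ : ℕ → Tm Sig) : Cnd Rules i ρ (fun n => subst θ (σ n)) := by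
  refine ⟨h.1, fun p hp => ?_⟩
  obtain ⟨v, h₁, h₂⟩ := h.2 p hp
  refine ⟨subst θ v, ?_, ?_⟩
  · rw [← subst_subst]
    exact rtg_map _ (fun _ _ h => condRel_subst i θ h) h₁
  · rw [← subst_subst]
    exact rtg_map _ (fun _ _ h => condRel_subst i θ h) h₂

/-- Nested parallelization of the level `i + 1` of conditional rewriting: `lσ` reduces to
`rτ` when the instance `σ` satisfies the conditions and `σ` reduces pointwise to `τ`. -/
inductive Par (Rules : Set (CondRule Sig)) (i : ℕ) : Tm Sig → Tm Sig → Prop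
  | var (n : ℕ) : Par Rules i (var n) (var n)
  | sym (f : Sig) : Par Rules i (sym f) (sym f)
  | app {t₁ u₁ t₂ u₂ : Tm Sig} : Par Rules i t₁ u₁ → Par Rules i t₂ u₂ →
      Par Rules i (app t₁ t₂) (app u₁ u₂)
  | lam {t u : Tm Sig} : Par Rules i t u → Par Rules i (lam t) (lam u)
  | rule {ρ : CondRule Sig} (σ τ : ℕ → Tm Sig) : Cnd Rules i ρ σ →
      (∀ n, Par Rules i (σ n) (τ n)) → Par Rules i (subst σ ρ.lhs) (subst τ ρ.rhs)

section

variable {Rules : Set (CondRule Sig)} {i : ℕ}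

theorem Par.refl (t : Tm Sig) : Par Rules i t t := by
  induction t with
  | var n => exact .var n
  | app t u iht ihu => exact .app iht ihu
  | sym f => exact .sym f
  | lam t ih => exact .lam ih

theorem Par.ren {t u : Tm Sig} (h : Par Rules i t u) :
    ∀ ξ, Par Rules i (ren ξ t) (ren ξ u) := by
  induction h with
  | var n => intro ξ; exact .var _
  | sym f => intro ξ; exact .sym f
  | app _ _ ih₁ ih₂ => intro ξ; exact .app (ih₁ ξ) (ih₂ ξ)
  | lam _ ih => intro ξ; exact .lam (ih _)
  | rule σ τ hc _ ih =>
    intro ξ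
    rw [ren_subst, ren_subst]
    refine .rule _ _ ?_ (fun n => ih n ξ)
    simp only [ren_eq_subst]
    exact hc.comp _

theorem Par.subst {t u : Tm Sig} (h : Par Rules i t u) : ∀ σ τ : ℕ → Tm Sig,
    (∀ n, Par Rules i (σ n) (τ n)) → Par Rules i (Tm.subst σ t) (Tm.subst τ u) := by
  induction h with
  | var n => intro σ τ h; exact h n
  | sym f => intro _ _ _; exact .sym f
  | app _ _ ih₁ ih₂ => intro σ τ h; exact .app (ih₁ _ _ h) (ih₂ _ _ h)
  | lam _ ih => intro σ τ h; exact .lam (ih _ _ (up_rel .var (fun ξ _ _ h => h.ren ξ) h))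
  | rule σ₀ τ₀ hc _ ih =>
    intro σ τ h
    rw [subst_subst, subst_subst]
    exact .rule _ _ (hc.comp σ) (fun n => ih n σ τ h)

theorem Par.of_condRel {t u : Tm Sig} (h : CondRel Rules (i + 1) t u) : Par Rules i t u := by
  change CondStep Rules (CondRel Rules i) t u at h
  induction h with
  | rule hρ σ hc => exact .rule σ σ ⟨hρ, hc⟩ (fun n => .refl _)
  | abs _ ih => exact .lam ih
  | appL _ ih => exact .app ih (.refl _)
  | appR _ ih => exact .app (.refl _) ih
  | substC σ _ ih => exact ih.subst σ σ (fun n => .refl _)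

/-- A parallel rewrite step commutes with a head β-step: an instance of a left-hand side
has no head redex, so the rewriting takes place strictly inside the components of the
redex and its arguments. -/
theorem head_par {t t' u : Tm Sig} (h : HeadAux t t') (hp : Par Rules i t u) :
    ∃ u', HeadAux u u' ∧ Par Rules i t' u' := by
  induction h generalizing u with
  | beta b a =>
    generalize hs : Tm.app (Tm.lam b) a = s at hp
    cases hp with
    | var | sym | lam => cases hs
    | app h₁ h₂ =>
      cases hs
      generalize hs : Tm.lam b = s at h₁
      cases h₁ with
      | var | sym | app => cases hs
      | lam h₁ =>
        cases hs
        exact ⟨_, .beta _ _, h₁.subst _ _ (scons_rel .var h₂)⟩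
      | @rule ρ σ τ _ _ => exact absurd hs.symm ((SPat.lhs ρ).ne_lam _ _)
    | @rule ρ σ τ _ _ => exact absurd (hs ▸ HeadAux.beta b a) ((SPat.lhs ρ).not_head _ _)
  | @app t t' v h ih =>
    generalize hs : Tm.app t v = s at hp
    cases hp with
    | var | sym | lam => cases hs
    | app h₁ h₂ =>
      cases hs
      obtain ⟨u', h, h'⟩ := ih h₁
      exact ⟨_, .app _ h, .app h' h₂⟩
    | @rule ρ σ τ _ _ => exact absurd (hs ▸ HeadAux.app v h) ((SPat.lhs ρ).not_head _ _)

/-- Many-step conditional rewriting at a fixed level. -/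
abbrev Steps (Rules : Set (CondRule Sig)) (i : ℕ) : Tm Sig → Tm Sig → Prop :=
  Relation.ReflTransGen (CondRel Rules i)

theorem Steps.app {t u t' u' : Tm Sig} (h : Steps Rules (i + 1) t u)
    (h' : Steps Rules (i + 1) t' u') : Steps Rules (i + 1) (app t t') (app u u') :=
  (rtg_map (fun t => Tm.app t t') (fun _ _ h => CondStep.appL h) h).trans
    (rtg_map (fun t => Tm.app u t) (fun _ _ h => CondStep.appR h) h')

theorem Steps.lam {t u : Tm Sig} (h : Steps Rules (i + 1) t u) :
    Steps Rules (i + 1) (lam t) (lam u) :=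
  rtg_map _ (fun _ _ h => CondStep.abs h) h

theorem SPat.steps {p : Tm Sig} (hp : SPat p) {σ τ : ℕ → Tm Sig}
    (h : ∀ x, FVar p x → Steps Rules (i + 1) (σ x) (τ x)) :
    Steps Rules (i + 1) (Tm.subst σ p) (Tm.subst τ p) := by
  induction hp with
  | sym f => exact .refl
  | appv n _ ih => exact Steps.app (ih fun x hx => h x (.inl hx)) (h n (.inr rfl))
  | app _ _ ih₁ ih₂ =>
    exact Steps.app (ih₁ fun x hx => h x (.inl hx)) (ih₂ fun x hx => h x (.inr hx))

theorem steps_alg {t : Tm Sig} (ht : Algebraic t) {σ τ : ℕ → Tm Sig}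
    (h : ∀ x, FVar t x → Steps Rules (i + 1) (σ x) (τ x)) :
    Steps Rules (i + 1) (subst σ t) (subst τ t) := by
  rcases pat_of_algebraic ht with ⟨n, rfl⟩ | hp
  · exact h n rfl
  · exact hp.steps h

end

/-! ### Projection of rewriting to β-normal forms -/

/-- Rewriting at level `i` preserves the existence of a β-normal form respecting `a`, and
projects to rewriting at level `i` between β-normal forms. -/
def Projects (a : Sig → ℕ) (Rules : Set (CondRule Sig)) (i : ℕ) : Prop :=
  ∀ t n u, Norm t n → RA a 0 n → Steps Rules i t u →
    ∃ n', Norm u n' ∧ RA a 0 n' ∧ Steps Rules i n n'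

section

variable {a : Sig → ℕ} {Rules : Set (CondRule Sig)} {i : ℕ}

/-- The conditions of a rule are inherited by the β-normal form of an instance. -/
theorem Cnd.normalize (halg : AlgebraicSys Rules) (harr : SysRespectsArity a Rules)
    (hi : Projects a Rules i) {ρ : CondRule Sig} {σ σ' : ℕ → Tm Sig} (hc : Cnd Rules i ρ σ)
    (hN : ∀ x, FVar ρ.lhs x → Norm (σ x) (σ' x)) (hR : ∀ x, FVar ρ.lhs x → RA a 0 (σ' x)) :
    Cnd Rules i ρ σ' := by
  refine ⟨hc.1, fun p hp => ?_⟩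
  obtain ⟨v, h₁, h₂⟩ := hc.2 p hp
  obtain ⟨fv₁, fv₂⟩ := ρ.fv_conds p hp
  obtain ⟨al₁, al₂⟩ := (halg ρ hc.1).1 p hp
  obtain ⟨ar₁, ar₂⟩ := (harr ρ hc.1).1 p hp
  obtain ⟨v₁, ⟨k₁, H₁⟩, _, s₁⟩ := hi _ _ _ (norm_alg al₁ fun x hx => hN x (fv₁ x hx))
    (ra_alg al₁ ar₁ fun x hx => hR x (fv₁ x hx)) h₁
  obtain ⟨v₂, ⟨k₂, H₂⟩, _, s₂⟩ := hi _ _ _ (norm_alg al₂ fun x hx => hN x (fv₂ x hx))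
    (ra_alg al₂ ar₂ fun x hx => hR x (fv₂ x hx)) h₂
  cases H₁.det H₂
  exact ⟨v₁, s₁, s₂⟩

/-- One parallel step projects to β-normal forms. A neutral term that is still to be
applied (`0 < k`) remains neutral, because a left-hand side is saturated. -/
theorem par_project (halg : AlgebraicSys Rules) (harr : SysRespectsArity a Rules)
    (hi : Projects a Rules i) : ∀ (h : ℕ) (b : Bool) (t n : Tm Sig), BN h b t n →
    ∀ k, (b = false → k = 0) → RA a k n → ∀ u, Par Rules i t u →
    ∃ n', RA a k n' ∧ Steps Rules (i + 1) n n' ∧ Norm u n' ∧ (0 < k → Neut u n') := by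
  intro h
  induction h using Nat.strong_induction_on with
  | _ h IH =>
  have hrule : ∀ {t n u : Tm Sig} {ρ : CondRule Sig} {σ τ : ℕ → Tm Sig}, BN h true t n →
      ∀ k, RA a k n → t = Tm.subst σ ρ.lhs → u = Tm.subst τ ρ.rhs → Cnd Rules i ρ σ →
      (∀ x, Par Rules i (σ x) (τ x)) →
      ∃ n', RA a k n' ∧ Steps Rules (i + 1) n n' ∧ Norm u n' ∧ (0 < k → Neut u n') := by
    rintro t n u ρ σ τ H k hk rfl rfl hc hp
    have hv : ∀ x, ∃ m, FVar ρ.lhs x → ∃ h', h' < h ∧ BN h' false (σ x) m := by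
      intro x
      by_cases hx : FVar ρ.lhs x
      · obtain ⟨h', m, l, H⟩ := (SPat.lhs ρ).vars H x hx
        exact ⟨m, fun _ => ⟨h', l, H⟩⟩
      · exact ⟨σ x, fun h => absurd h hx⟩
    choose σ' hσ' using hv
    have hN : ∀ x, FVar ρ.lhs x → Norm (σ x) (σ' x) := fun x hx =>
      let ⟨h', _, H⟩ := hσ' x hx
      ⟨h', H⟩
    obtain ⟨h₁, H₁⟩ := (SPat.lhs ρ).neut hN
    cases H.det H₁
    cases lhs_saturated (harr ρ hc.1) hk
    have hR := (SPat.lhs ρ).ra_vars hk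
    have ht : ∀ x, ∃ m, FVar ρ.lhs x →
        RA a 0 m ∧ Steps Rules (i + 1) (σ' x) m ∧ Norm (τ x) m := by
      intro x
      by_cases hx : FVar ρ.lhs x
      · obtain ⟨h', l, H'⟩ := hσ' x hx
        obtain ⟨m, h₁, h₂, h₃, _⟩ := IH h' l _ _ _ H' 0 (fun _ => rfl) (hR x hx) _ (hp x)
        exact ⟨m, fun _ => ⟨h₁, h₂, h₃⟩⟩
      · exact ⟨σ x, fun h => absurd h hx⟩
    choose τ' hτ' using ht
    have hc' := hc.normalize halg harr hi hN hR
    have har := (halg ρ hc.1).2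
    refine ⟨Tm.subst τ' ρ.rhs, ?_, ?_, ?_, fun h => absurd h (lt_irrefl 0)⟩
    · exact ra_alg har (harr ρ hc.1).2.2.1 fun x hx => (hτ' x (ρ.fv_rhs x hx)).1
    · exact Relation.ReflTransGen.head (CondStep.rule hc'.1 σ' hc'.2)
        (steps_alg har fun x hx => (hτ' x (ρ.fv_rhs x hx)).2.1)
    · exact norm_alg har fun x hx => (hτ' x (ρ.fv_rhs x hx)).2.2
  intro b t n H k hb hk u hp
  have H' := H
  cases H with
  | var _ m =>
    obtain ⟨s, hs⟩ : ∃ s, Tm.var m = s := ⟨_, rfl⟩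
    rw [hs] at hp
    cases hp with
    | sym | lam | app => cases hs
    | var =>
      cases hs
      exact ⟨_, hk, .refl, Neut.norm ⟨h, H'⟩, fun _ => ⟨h, H'⟩⟩
    | rule σ τ hc hp => exact hrule H' k hk hs rfl hc hp
  | sym _ f =>
    obtain ⟨s, hs⟩ : ∃ s, Tm.sym f = s := ⟨_, rfl⟩
    rw [hs] at hp
    cases hp with
    | var | lam | app => cases hs
    | sym =>
      cases hs
      exact ⟨_, hk, .refl, Neut.norm ⟨h, H'⟩, fun _ => ⟨h, H'⟩⟩
    | rule σ τ hc hp => exact hrule H' k hk hs rfl hc hp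
  | @app _ h₁ h₂ t n s m H₁ H₂ l₁ l₂ =>
    obtain ⟨r, hs⟩ : ∃ r, Tm.app t s = r := ⟨_, rfl⟩
    rw [hs] at hp
    cases hp with
    | var | lam | sym => cases hs
    | app p₁ p₂ =>
      cases hs
      obtain ⟨n', r₁, s₁, _, N₁⟩ := IH h₁ l₁ _ _ _ H₁ (k + 1) (by simp) hk.1 _ p₁
      obtain ⟨m', r₂, s₂, N₂, _⟩ := IH h₂ l₂ _ _ _ H₂ 0 (by simp) hk.2 _ p₂
      have N := (N₁ k.succ_pos).app N₂
      exact ⟨Tm.app n' m', ⟨r₁, r₂⟩, s₁.app s₂, N.norm, fun _ => N⟩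
    | rule σ τ hc hp => exact hrule H' k hk hs rfl hc hp
  | emb H₁ l₁ => exact IH _ l₁ _ _ _ H₁ k (fun h => by cases h) hk _ hp
  | @lam _ h₁ t n H₁ l₁ =>
    cases hb rfl
    obtain ⟨s, hs⟩ : ∃ s, Tm.lam t = s := ⟨_, rfl⟩
    rw [hs] at hp
    cases hp with
    | var | app | sym => cases hs
    | lam p =>
      cases hs
      obtain ⟨n', r, s, N, _⟩ := IH h₁ l₁ _ _ _ H₁ 0 (by simp) hk _ p
      exact ⟨Tm.lam n', r, s.lam, N.lam, fun h => absurd h (lt_irrefl 0)⟩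
    | @rule ρ σ τ _ _ => exact absurd hs.symm ((SPat.lhs ρ).ne_lam _ _)
  | head hd H₁ l₁ =>
    cases hb rfl
    obtain ⟨u', hd', p⟩ := head_par hd hp
    obtain ⟨n', r, s, N, _⟩ := IH _ l₁ _ _ _ H₁ 0 (by simp) hk _ p
    exact ⟨_, r, s, N.head hd', fun h => absurd h (lt_irrefl 0)⟩

theorem projects (halg : AlgebraicSys Rules) (harr : SysRespectsArity a Rules) :
    ∀ i, Projects a Rules i := by
  intro i
  induction i with
  | zero =>
    intro t n u hN hR hs
    induction hs with
    | refl => exact ⟨n, hN, hR, .refl⟩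
    | tail _ h _ => exact h.elim
  | succ i hi =>
    intro t n u hN hR hs
    induction hs with
    | refl => exact ⟨n, hN, hR, .refl⟩
    | tail _ h ih =>
      obtain ⟨m, ⟨k, hm⟩, hmR, s⟩ := ih
      obtain ⟨n', r, s', N, _⟩ :=
        par_project halg harr hi k _ _ _ hm 0 (fun _ => rfl) hmR _ (.of_condRel h)
      exact ⟨n', N, r, s.trans s'⟩

theorem union_project (halg : AlgebraicSys Rules) (harr : SysRespectsArity a Rules)
    {t n u : Tm Sig} (hN : Norm t n) (hR : RA a 0 n)
    (hs : Relation.ReflTransGen (fun t u : Tm Sig => Beta t u ∨ CondRew Rules t u) t u) :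
    ∃ n', Norm u n' ∧ RA a 0 n' ∧ Relation.ReflTransGen (CondRew Rules) n n' := by
  induction hs with
  | refl => exact ⟨n, hN, hR, .refl⟩
  | tail _ h ih =>
    obtain ⟨m, hm, hmR, s⟩ := ih
    rcases h with h | ⟨i, h⟩
    · obtain ⟨k, hm⟩ := hm
      exact ⟨m, hm.pb (.of_beta h), hmR, s⟩
    · obtain ⟨n', N, r, s'⟩ := projects halg harr i _ _ _ hm hmR (.single h)
      exact ⟨n', N, r, s.trans (rtg_map id (fun _ _ h => ⟨i, h⟩) s')⟩

end

end BetaCond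

/-- If `R` is algebraic and respects the arity `a`, and `→_R` is
confluent on `AN_a`, then `→_{β∪R}` is confluent on `AN_a`. -/
theorem confluence_beta_union_cond_on_AN {Sig : Type} (a : Sig → ℕ)
    (Rules : Set (CondRule Sig))
    (halg : AlgebraicSys Rules) (harr : SysRespectsArity a Rules)
    (hconf : ConfluentOn (ANset a) (CondRew Rules)) :
    ConfluentOn (ANset a) (fun t u : Tm Sig => Beta t u ∨ CondRew Rules t u) := by
  rintro t ⟨n, hn, hr⟩ u v hu hv
  have hN := BetaCond.norm_of_isBnf hn
  have hR : BetaCond.RA a 0 n := BetaCond.ra_of_respects n [] hr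
  obtain ⟨nu, ⟨_, Hu⟩, _, su⟩ := BetaCond.union_project halg harr hN hR hu
  obtain ⟨nv, ⟨_, Hv⟩, _, sv⟩ := BetaCond.union_project halg harr hN hR hv
  obtain ⟨w, hw₁, hw₂⟩ := hconf n ⟨n, ⟨.refl, hn.2⟩, hr⟩ nu nv su sv
  exact ⟨w, (BetaCond.rtg_map id (fun _ _ h => .inl h) Hu.betas).trans
      (BetaCond.rtg_map id (fun _ _ h => .inr h) hw₁),
    (BetaCond.rtg_map id (fun _ _ h => .inl h) Hv.betas).trans
      (BetaCond.rtg_map id (fun _ _ h => .inr h) hw₂)⟩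
end

section
/- Let R be a semi-closed, left-linear, algebraic conditional rewrite system that respects an arity a : Σ → ℕ. Then on any conditionally (R,a)-stable set of terms, if →_R is confluent then →_{β∪R(β)} = →β ∪ →_{R(β)} is confluent. -/
/-!
Write `→R` for `CondRew Rules` and `t*` for Takahashi's complete β-development (`CondBeta.dev`), so
that `t →β* u` implies `u →β* t^{*n}` for some `n`. The theorem reduces to the factorization

  `t →*_{β ∪ R(β)} u`  implies  `t →β* t' →R* u' ←β* u`,  for `t ∈ S`.

Given two reductions from `t`, the two terms `t'` are joined by confluence of β, the two `→R*`
sequences are transported to that common reduct because `→R` commutes with β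
(`CondBeta.rew_pb_star`), and confluence of `→R` on `S` closes the diagram.

Commutation (`CondBeta.rew_pb`) compares one `→R`-step with one parallel β-step. A linear algebraic
left-hand side only allows β-steps inside the substitution (`CondBeta.pb_subst_alg`), and the
conditions survive since a reduct of the closed applicative `c` is applicative, hence
a parallel β-step leaves it unchanged.

The factorization of a sequence is obtained from that of single steps (`CondBeta.factor_star`). What
is needed there is that `→R`-steps create no β-redexes on terms respecting the arity, because the
contracted subterm `f l₁ … lₖ` has `k = a f` and is never applied; in terms of developments,
`t →R u` implies `t* →R* u*` (`CondBeta.rew_dev`).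

For a single `R(β)_{i+1}`-step `lσ → rσ` (`CondBeta.factor_step`), the term `dσ` is in `S`, and the
factorization at level `i` gives `dσ →β* s →R* w`, where `w` is a common reduct with `c`. Since `d` is
algebraic, `s →β* (dσ)^{*n} = d(σ^{*n})`, and commutation yields `d(σ^{*n}) →R* w`. For `n` large
enough for all the conditions, `lσ →β* l(σ^{*n}) →R r(σ^{*n}) ←β* rσ`. Finally `c →R* w` because
nothing reachable from an applicative term contains a β-redex (`CondBeta.applicative_brew`).
-/

set_option autoImplicit false

namespace CondBeta

open Relation Tm

variable {Sig : Type}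

/-! ### Renaming and substitution -/

/-- Lift a renaming under one binder. -/
def upr (ξ : ℕ → ℕ) : ℕ → ℕ
  | 0 => 0
  | n + 1 => ξ n + 1

/-- Renaming of free de Bruijn indices. -/
def rename (ξ : ℕ → ℕ) : Tm Sig → Tm Sig
  | var n => var (ξ n)
  | app t u => app (rename ξ t) (rename ξ u)
  | lam t => lam (rename (upr ξ) t)
  | sym f => sym f

theorem lift_eq_rename (d : ℕ) (t : Tm Sig) :
    lift d t = rename (fun n => if n < d then n else n + 1) t := by
  induction t generalizing d with
  | var n => simp only [lift, rename]; split <;> rfl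
  | app t u iht ihu => simp [lift, rename, iht, ihu]
  | sym f => rfl
  | lam t ih =>
    simp only [lift, rename, ih]
    congr 2
    funext n
    cases n with
    | zero => simp [upr]
    | succ n => simp only [upr, Nat.add_lt_add_iff_right]; split <;> rfl

theorem lift_zero (t : Tm Sig) : lift 0 t = rename Nat.succ t := by
  rw [lift_eq_rename]; simp

theorem rename_rename (ξ ζ : ℕ → ℕ) (t : Tm Sig) :
    rename ζ (rename ξ t) = rename (ζ ∘ ξ) t := by
  induction t generalizing ξ ζ with
  | var n => rfl
  | app t u iht ihu => simp [rename, iht, ihu]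
  | sym f => rfl
  | lam t ih =>
    simp only [rename, ih]
    congr 2
    funext n; cases n <;> rfl

theorem subst_rename (ξ : ℕ → ℕ) (σ : ℕ → Tm Sig) (t : Tm Sig) :
    subst σ (rename ξ t) = subst (σ ∘ ξ) t := by
  induction t generalizing ξ σ with
  | var n => rfl
  | app t u iht ihu => simp [rename, subst, iht, ihu]
  | sym f => rfl
  | lam t ih =>
    simp only [rename, subst, ih]
    congr 2
    funext n; cases n <;> rfl

theorem rename_eq_subst (ξ : ℕ → ℕ) (t : Tm Sig) :
    rename ξ t = subst (fun n => var (ξ n)) t := by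
  induction t generalizing ξ with
  | var n => rfl
  | app t u iht ihu => simp [rename, subst, iht, ihu]
  | sym f => rfl
  | lam t ih =>
    simp only [rename, subst, ih]
    congr 2
    funext n
    cases n <;> simp [upr, up, lift]

theorem rename_subst (ξ : ℕ → ℕ) (σ : ℕ → Tm Sig) (t : Tm Sig) :
    rename ξ (subst σ t) = subst (fun n => rename ξ (σ n)) t := by
  induction t generalizing ξ σ with
  | var n => rfl
  | app t u iht ihu => simp [rename, subst, iht, ihu]
  | sym f => rfl
  | lam t ih =>
    simp only [rename, subst, ih]
    congr 2
    funext n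
    cases n with
    | zero => rfl
    | succ n => simp only [up, lift_zero, rename_rename]; rfl

theorem subst_subst (σ τ : ℕ → Tm Sig) (t : Tm Sig) :
    subst τ (subst σ t) = subst (fun n => subst τ (σ n)) t := by
  induction t generalizing σ τ with
  | var n => rfl
  | app t u iht ihu => simp [subst, iht, ihu]
  | sym f => rfl
  | lam t ih =>
    simp only [subst, ih]
    congr 2
    funext n
    cases n with
    | zero => rfl
    | succ n =>
      simp only [up, lift_zero, subst_rename, rename_subst]
      congr 1
      funext k
      simp [up, lift_zero]

theorem up_var : up (var : ℕ → Tm Sig) = var := by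
  funext n; cases n <;> simp [up, lift]

theorem subst_var (t : Tm Sig) : subst var t = t := by
  induction t with
  | var n => rfl
  | app t u iht ihu => simp [subst, iht, ihu]
  | sym f => rfl
  | lam t ih => simp [subst, up_var, ih]

theorem subst_subst1 (σ : ℕ → Tm Sig) (u t : Tm Sig) :
    subst σ (subst1 u t) = subst1 (subst σ u) (subst (up σ) t) := by
  simp only [subst1, subst_subst]
  congr 1
  funext n
  cases n with
  | zero => rfl
  | succ n =>
    simp only [up, lift_zero, subst_rename, scons, subst]
    exact (subst_var _).symm

theorem subst_congr (σ τ : ℕ → Tm Sig) (t : Tm Sig) (h : ∀ n, FVar t n → σ n = τ n) :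
    subst σ t = subst τ t := by
  induction t generalizing σ τ with
  | var n => exact h n rfl
  | app t u iht ihu =>
    simp only [subst]
    rw [iht σ τ fun n hn => h n (Or.inl hn), ihu σ τ fun n hn => h n (Or.inr hn)]
  | sym f => rfl
  | lam t ih =>
    simp only [subst]
    rw [ih (up σ) (up τ)]
    intro n hn
    cases n with
    | zero => rfl
    | succ n => simp only [up]; rw [h n hn]

theorem subst_closed (σ : ℕ → Tm Sig) {t : Tm Sig} (h : ClosedTm t) : subst σ t = t := by
  rw [subst_congr σ var t fun n hn => absurd hn (h n), subst_var]

theorem countVar_pos (t : Tm Sig) (n : ℕ) : 0 < countVar t n ↔ FVar t n := by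
  induction t generalizing n with
  | var m => simp only [countVar, FVar]; split <;> simp_all
  | app t u iht ihu => simp only [countVar, FVar, ← iht, ← ihu]; omega
  | sym f => simp [countVar, FVar]
  | lam t ih => exact ih (n + 1)

/-! ### Rewrite relations -/

theorem star_mono {P Q : Tm Sig → Tm Sig → Prop} {t u : Tm Sig} (h : ReflTransGen P t u)
    (hPQ : ∀ t u, P t u → Q t u) : ReflTransGen Q t u :=
  h.lift id hPQ

/-- Closure properties of a rewrite relation. -/
structure IsRew (R : Tm Sig → Tm Sig → Prop) : Prop where
  abs {t u} : R t u → R (lam t) (lam u)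
  appL {t u v} : R t u → R (app t v) (app u v)
  appR {t u v} : R t u → R (app v t) (app v u)
  sub (σ) {t u} : R t u → R (subst σ t) (subst σ u)

namespace IsRew

variable {R : Tm Sig → Tm Sig → Prop}

theorem star_abs (hR : IsRew R) {t u : Tm Sig} (h : ReflTransGen R t u) :
    ReflTransGen R (lam t) (lam u) :=
  h.lift lam fun _ _ => hR.abs

theorem star_app (hR : IsRew R) {t t' u u' : Tm Sig} (ht : ReflTransGen R t t')
    (hu : ReflTransGen R u u') : ReflTransGen R (app t u) (app t' u') :=
  (ht.lift (fun x => app x u) fun _ _ => hR.appL).trans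
    (hu.lift (fun x => app t' x) fun _ _ => hR.appR)

theorem star_sub (hR : IsRew R) (σ : ℕ → Tm Sig) {t u : Tm Sig} (h : ReflTransGen R t u) :
    ReflTransGen R (subst σ t) (subst σ u) :=
  h.lift (subst σ) fun _ _ => hR.sub σ

theorem star_up (hR : IsRew R) {σ τ : ℕ → Tm Sig} (h : ∀ n, ReflTransGen R (σ n) (τ n)) (n : ℕ) :
    ReflTransGen R (up σ n) (up τ n) := by
  cases n with
  | zero => exact .refl
  | succ n =>
    simp only [up, lift_zero, rename_eq_subst]
    exact hR.star_sub _ (h n)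

theorem star_subst (hR : IsRew R) (t : Tm Sig) {σ τ : ℕ → Tm Sig}
    (h : ∀ n, ReflTransGen R (σ n) (τ n)) : ReflTransGen R (subst σ t) (subst τ t) := by
  induction t generalizing σ τ with
  | var n => exact h n
  | app t u iht ihu => exact hR.star_app (iht h) (ihu h)
  | sym f => exact .refl
  | lam t ih => exact hR.star_abs (ih (hR.star_up h))

theorem star_subst1 (hR : IsRew R) {t t' u u' : Tm Sig} (ht : ReflTransGen R t t')
    (hu : ReflTransGen R u u') : ReflTransGen R (subst1 u t) (subst1 u' t') := by
  refine (hR.star_sub _ ht).trans (hR.star_subst _ fun n => ?_)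
  cases n with
  | zero => exact hu
  | succ n => exact .refl

end IsRew

theorem isRew_beta : IsRew (Beta (Sig := Sig)) := ⟨.abs, .appL, .appR, .substC⟩

/-! ### Parallel β-reduction and complete developments -/

/-- Parallel β-reduction, defined without closure under substitution as a constructor; that
closure is derived in `Par.subst`. -/
inductive Par : Tm Sig → Tm Sig → Prop
  | var (n : ℕ) : Par (var n) (var n)
  | sym (f : Sig) : Par (sym f) (sym f)
  | app {t t' u u' : Tm Sig} : Par t t' → Par u u' → Par (app t u) (app t' u')
  | abs {t t' : Tm Sig} : Par t t' → Par (lam t) (lam t')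
  | beta {t t' u u' : Tm Sig} : Par t t' → Par u u' → Par (app (lam t) u) (subst1 u' t')

theorem Par.rfl' (t : Tm Sig) : Par t t := by
  induction t with
  | var n => exact .var n
  | app t u iht ihu => exact .app iht ihu
  | sym f => exact .sym f
  | lam t ih => exact .abs ih

theorem Par.rename {t t' : Tm Sig} (h : Par t t') (ξ : ℕ → ℕ) :
    Par (rename ξ t) (rename ξ t') := by
  induction h generalizing ξ with
  | var n => exact .var _
  | sym f => exact .sym f
  | app _ _ iht ihu => exact .app (iht ξ) (ihu ξ)
  | abs _ ih => exact .abs (ih _)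
  | @beta t t' u u' _ _ iht ihu =>
    have e : CondBeta.rename ξ (subst1 u' t')
        = subst1 (CondBeta.rename ξ u') (CondBeta.rename (upr ξ) t') := by
      simp only [rename_eq_subst, subst_subst1]
      congr 2
      funext n; cases n <;> simp [up, upr, lift]
    rw [e]
    exact .beta (iht _) (ihu ξ)

theorem Par.up {σ τ : ℕ → Tm Sig} (h : ∀ n, Par (σ n) (τ n)) (n : ℕ) :
    Par (up σ n) (up τ n) := by
  cases n with
  | zero => exact .var 0
  | succ n => simp only [Tm.up, lift_zero]; exact (h n).rename _

theorem Par.subst {t t' : Tm Sig} (h : Par t t') {σ τ : ℕ → Tm Sig}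
    (hσ : ∀ n, Par (σ n) (τ n)) : Par (subst σ t) (subst τ t') := by
  induction h generalizing σ τ with
  | var n => exact hσ n
  | sym f => exact .sym f
  | app _ _ iht ihu => exact .app (iht hσ) (ihu hσ)
  | abs _ ih => exact .abs (ih (Par.up hσ))
  | beta _ _ iht ihu =>
    rw [subst_subst1]
    exact .beta (iht (Par.up hσ)) (ihu hσ)

theorem Par.subst1 {t t' u u' : Tm Sig} (ht : Par t t') (hu : Par u u') :
    Par (subst1 u t) (subst1 u' t') := by
  refine ht.subst fun n => ?_
  cases n with
  | zero => exact hu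
  | succ n => exact .var n

theorem Par.of_beta {t u : Tm Sig} (h : Beta t u) : Par t u := by
  induction h with
  | beta t u => exact .beta (.rfl' t) (.rfl' u)
  | abs _ ih => exact .abs ih
  | appL _ ih => exact .app ih (.rfl' _)
  | appR _ ih => exact .app (.rfl' _) ih
  | substC σ _ ih => exact ih.subst fun n => .rfl' _

theorem Par.beta_star {t u : Tm Sig} (h : Par t u) : ReflTransGen Beta t u := by
  induction h with
  | var n => exact .refl
  | sym f => exact .refl
  | app _ _ iht ihu => exact isRew_beta.star_app iht ihu
  | abs _ ih => exact isRew_beta.star_abs ih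
  | beta _ _ iht ihu =>
    exact (isRew_beta.star_app (isRew_beta.star_abs iht) ihu).tail (.beta _ _)

theorem par_star {t u : Tm Sig} (h : ReflTransGen Beta t u) : ReflTransGen Par t u :=
  star_mono h fun _ _ => Par.of_beta

/-- Takahashi's complete development: contracts all β-redexes of the term simultaneously. -/
def dev : Tm Sig → Tm Sig
  | var n => var n
  | sym f => sym f
  | lam t => lam (dev t)
  | app (lam t) u => subst1 (dev u) (dev t)
  | app t u => app (dev t) (dev u)

theorem dev_app {t : Tm Sig} (u : Tm Sig) (h : ∀ s, t ≠ lam s) :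
    dev (app t u) = app (dev t) (dev u) := by
  cases t with
  | lam s => exact absurd rfl (h s)
  | _ => simp [dev]

theorem Par.triangle {t u : Tm Sig} (h : Par t u) : Par u (dev t) := by
  induction h with
  | var n => exact .var n
  | sym f => exact .sym f
  | @app t t' u u' ht _ iht ihu =>
    by_cases hl : ∃ s, t = lam s
    · obtain ⟨s, rfl⟩ := hl
      cases ht
      simp only [dev] at iht ⊢
      cases iht with
      | abs h => exact .beta h ihu
    · rw [dev_app u (not_exists.mp hl)]
      exact .app iht ihu
  | abs _ ih => exact .abs ih
  | beta _ _ iht ihu => simp only [dev]; exact iht.subst1 ihu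

theorem beta_dev (t : Tm Sig) : ReflTransGen Beta t (dev t) :=
  (Par.rfl' t).triangle.beta_star

theorem beta_dev_iter (n : ℕ) (t : Tm Sig) : ReflTransGen Beta t (dev^[n] t) := by
  induction n generalizing t with
  | zero => exact .refl
  | succ n ih => exact (beta_dev t).trans (ih (dev t))

theorem Par.dev_iter (n : ℕ) {t u : Tm Sig} (h : Par t u) : Par (dev^[n] t) (dev^[n] u) := by
  induction n generalizing t u with
  | zero => exact h
  | succ n ih => exact ih h.triangle.triangle

/-- Iterated developments are cofinal among the β-reducts. -/
theorem beta_cofinal {t u : Tm Sig} (h : ReflTransGen Beta t u) :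
    ∃ n, ReflTransGen Beta u (dev^[n] t) := by
  induction h using ReflTransGen.head_induction_on with
  | refl => exact ⟨0, .refl⟩
  | head h _ ih =>
    obtain ⟨n, hn⟩ := ih
    exact ⟨n + 1, hn.trans ((Par.of_beta h).triangle.dev_iter n).beta_star⟩

theorem beta_confluent {t u v : Tm Sig} (hu : ReflTransGen Beta t u)
    (hv : ReflTransGen Beta t v) : ∃ w, ReflTransGen Beta u w ∧ ReflTransGen Beta v w := by
  obtain ⟨m, hm⟩ := beta_cofinal hu
  obtain ⟨n, hn⟩ := beta_cofinal hv
  refine ⟨dev^[m + n] t, ?_, ?_⟩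
  · rw [Nat.add_comm, Function.iterate_add_apply]
    exact hm.trans (beta_dev_iter n _)
  · rw [Function.iterate_add_apply]
    exact hn.trans (beta_dev_iter m _)

/-! ### Algebraic and applicative terms -/

/-- Structural form of `Tm.Algebraic`: no abstraction, and no variable in head position of an
application. -/
def Alg : Tm Sig → Prop
  | var _ => True
  | sym _ => True
  | lam _ => False
  | app t u => (∀ n, t ≠ var n) ∧ Alg t ∧ Alg u

theorem alg_appList {h : Tm Sig} (ts : List (Tm Sig)) (hh : Alg h) (hv : ∀ n, h ≠ var n)
    (hts : ∀ t ∈ ts, Alg t) : Alg (appList h ts) := by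
  induction ts generalizing h with
  | nil => exact hh
  | cons u us ih =>
    exact ih ⟨hv, hh, hts u (by simp)⟩ (by simp) fun t ht => hts t (by simp [ht])

theorem alg_of_algebraic {t : Tm Sig} (h : Algebraic t) : Alg t := by
  induction h with
  | var n => trivial
  | symApp f ts _ ih => exact alg_appList ts trivial (by simp) ih

theorem Alg.applicative {t : Tm Sig} (h : Alg t) : Applicative t := by
  induction t with
  | var n => exact .var n
  | app t u iht ihu => exact .app (iht h.2.1) (ihu h.2.2)
  | sym f => exact .sym f
  | lam t _ => exact h.elim

theorem Alg.subst_ne_lam {t : Tm Sig} (h : Alg t) (hv : ∀ n, t ≠ var n) (σ : ℕ → Tm Sig)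
    (s : Tm Sig) : subst σ t ≠ lam s := by
  cases t with
  | var n => exact absurd rfl (hv n)
  | lam t => exact h.elim
  | _ => simp [subst]

/-- Development commutes with the instantiation of an algebraic term: no redex is created at the
boundary between the term and the substitution. -/
theorem Alg.dev_subst {t : Tm Sig} (h : Alg t) (σ : ℕ → Tm Sig) :
    dev (subst σ t) = subst (fun n => dev (σ n)) t := by
  induction t with
  | var n => rfl
  | app t u iht ihu =>
    simp only [subst]
    rw [dev_app _ (h.2.1.subst_ne_lam h.1 σ), iht h.2.1, ihu h.2.2]
  | sym f => rfl
  | lam t _ => exact h.elim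

theorem Alg.dev_iter_subst {t : Tm Sig} (h : Alg t) (n : ℕ) (σ : ℕ → Tm Sig) :
    dev^[n] (subst σ t) = subst (fun k => dev^[n] (σ k)) t := by
  induction n generalizing σ with
  | zero => rfl
  | succ n ih => simp only [Function.iterate_succ_apply]; rw [h.dev_subst, ih]

/-- A parallel β-step from an instance of a linear algebraic term acts inside the substitution
only. -/
theorem pb_subst_alg {l : Tm Sig} (hl : Alg l) (hlin : LinearTm l) {σ : ℕ → Tm Sig} {t : Tm Sig}
    (h : Par (subst σ l) t) : ∃ τ : ℕ → Tm Sig, (∀ n, Par (σ n) (τ n)) ∧ t = subst τ l := by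
  induction l generalizing t with
  | var n =>
    refine ⟨Function.update σ n t, fun k => ?_, by simp [subst]⟩
    by_cases hk : k = n
    · subst hk; simpa [subst] using h
    · simpa [hk] using Par.rfl' (σ k)
  | sym f =>
    simp only [subst] at h
    cases h
    exact ⟨σ, fun _ => .rfl' _, rfl⟩
  | lam t _ => exact hl.elim
  | app l₁ l₂ ih₁ ih₂ =>
    have hc : ∀ n, countVar l₁ n + countVar l₂ n ≤ 1 := hlin
    simp only [subst] at h
    generalize hs : subst σ l₁ = s at h
    cases h with
    | beta _ _ => exact absurd hs (hl.2.1.subst_ne_lam hl.1 σ _)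
    | app h₁ h₂ =>
      subst hs
      obtain ⟨τ₁, hτ₁, rfl⟩ := ih₁ hl.2.1 (fun n => by have := hc n; omega) h₁
      obtain ⟨τ₂, hτ₂, rfl⟩ := ih₂ hl.2.2 (fun n => by have := hc n; omega) h₂
      classical
      -- By linearity the two halves share no variable, so the two substitutions can be glued.
      refine ⟨fun n => if FVar l₁ n then τ₁ n else τ₂ n, fun n => ?_, ?_⟩
      · dsimp only
        split
        · exact hτ₁ n
        · exact hτ₂ n
      · simp only [subst]
        congr 1
        · exact subst_congr _ _ _ fun n hn => by simp [hn]
        refine subst_congr _ _ _ fun n hn => ?_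
        have h₁ : ¬ FVar l₁ n := fun h' => by
          have := (countVar_pos l₁ n).2 h'
          have := (countVar_pos l₂ n).2 hn
          have := hc n
          omega
        simp [h₁]

theorem applicative_of_subst {σ : ℕ → Tm Sig} {t : Tm Sig} (h : Applicative (subst σ t)) {n : ℕ}
    (hn : FVar t n) : Applicative (σ n) := by
  induction t with
  | var m => cases hn; exact h
  | app t u iht ihu =>
    cases h with
    | app ht hu => exact hn.elim (iht ht) (ihu hu)
  | sym f => exact hn.elim
  | lam t _ => cases h

theorem applicative_subst {σ : ℕ → Tm Sig} {t : Tm Sig} (h : Applicative t)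
    (hσ : ∀ n, FVar t n → Applicative (σ n)) : Applicative (subst σ t) := by
  induction h with
  | var n => exact hσ n rfl
  | sym f => exact .sym f
  | app _ _ iht ihu =>
    exact .app (iht fun n hn => hσ n (Or.inl hn)) (ihu fun n hn => hσ n (Or.inr hn))

theorem applicative_par {t u : Tm Sig} (h : Applicative t) (hp : Par t u) : u = t := by
  induction hp with
  | var n => rfl
  | sym f => rfl
  | app _ _ iht ihu => cases h with | app h₁ h₂ => rw [iht h₁, ihu h₂]
  | abs _ _ => cases h
  | beta _ _ _ _ => cases h with | app h₁ _ => cases h₁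

theorem applicative_beta_star {t u : Tm Sig} (h : Applicative t) (hb : ReflTransGen Beta t u) :
    u = t := by
  induction hb with
  | refl => rfl
  | tail _ hb ih => subst ih; exact applicative_par h (.of_beta hb)

/-! ### Conditional rewrite steps -/

variable {Rules : Set (CondRule Sig)}

/-- Conditional rewrite steps relative to `prev`, without closure under substitution as a
constructor; equivalent to `CondStep` when `prev` is itself closed under substitution. -/
inductive Step (Rules : Set (CondRule Sig)) (prev : Tm Sig → Tm Sig → Prop) :
    Tm Sig → Tm Sig → Prop
  | rule {ρ : CondRule Sig} (hρ : ρ ∈ Rules) (σ : ℕ → Tm Sig)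
      (hconds : ∀ p ∈ ρ.conds, Joinable prev (subst σ p.1) (subst σ p.2)) :
      Step Rules prev (subst σ ρ.lhs) (subst σ ρ.rhs)
  | abs {t u : Tm Sig} : Step Rules prev t u → Step Rules prev (lam t) (lam u)
  | appL {t u v : Tm Sig} : Step Rules prev t u → Step Rules prev (app t v) (app u v)
  | appR {t u v : Tm Sig} : Step Rules prev t u → Step Rules prev (app v t) (app v u)

theorem joinable_mono {P Q : Tm Sig → Tm Sig → Prop} (h : ∀ t u, P t u → Q t u) {t u : Tm Sig}
    (hj : Joinable P t u) : Joinable Q t u := by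
  obtain ⟨w, h₁, h₂⟩ := hj
  exact ⟨w, star_mono h₁ h, star_mono h₂ h⟩

theorem Step.subst {prev : Tm Sig → Tm Sig → Prop}
    (hp : ∀ (σ : ℕ → Tm Sig) t u, prev t u → prev (subst σ t) (subst σ u))
    {t u : Tm Sig} (h : Step Rules prev t u) (τ : ℕ → Tm Sig) :
    Step Rules prev (subst τ t) (subst τ u) := by
  induction h generalizing τ with
  | rule hρ σ hc =>
    rw [subst_subst, subst_subst]
    refine .rule hρ _ fun p hpm => ?_
    obtain ⟨w, h₁, h₂⟩ := hc p hpm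
    rw [← subst_subst, ← subst_subst]
    exact ⟨_, h₁.lift _ (hp τ), h₂.lift _ (hp τ)⟩
  | abs _ ih => exact .abs (ih _)
  | appL _ ih => exact .appL (ih τ)
  | appR _ ih => exact .appR (ih τ)

theorem step_of_condStep {prev : Tm Sig → Tm Sig → Prop}
    (hp : ∀ (σ : ℕ → Tm Sig) t u, prev t u → prev (subst σ t) (subst σ u))
    {t u : Tm Sig} (h : CondStep Rules prev t u) : Step Rules prev t u := by
  induction h with
  | rule hρ σ hc => exact .rule hρ σ hc
  | abs _ ih => exact .abs ih
  | appL _ ih => exact .appL ih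
  | appR _ ih => exact .appR ih
  | substC σ _ ih => exact ih.subst hp σ

theorem condStep_mono {P Q : Tm Sig → Tm Sig → Prop} (h : ∀ t u, P t u → Q t u)
    {t u : Tm Sig} (hs : CondStep Rules P t u) : CondStep Rules Q t u := by
  induction hs with
  | rule hρ σ hc => exact .rule hρ σ fun p hp => joinable_mono h (hc p hp)
  | abs _ ih => exact .abs ih
  | appL _ ih => exact .appL ih
  | appR _ ih => exact .appR ih
  | substC σ _ ih => exact .substC σ ih

theorem Step.mono {P Q : Tm Sig → Tm Sig → Prop} (h : ∀ t u, P t u → Q t u)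
    {t u : Tm Sig} (hs : Step Rules P t u) : Step Rules Q t u := by
  induction hs with
  | rule hρ σ hc => exact .rule hρ σ fun p hp => joinable_mono h (hc p hp)
  | abs _ ih => exact .abs ih
  | appL _ ih => exact .appL ih
  | appR _ ih => exact .appR ih

theorem Step.barRel {prev : Tm Sig → Tm Sig → Prop} {t u : Tm Sig} (h : Step Rules prev t u) :
    BarRel Rules t u := by
  induction h with
  | rule hρ σ _ => exact .ruleRhs hρ σ
  | abs _ ih => exact .abs ih
  | appL _ ih => exact .appL ih
  | appR _ ih => exact .appR ih

theorem condRel_sub (i : ℕ) (σ : ℕ → Tm Sig) (t u : Tm Sig) (h : CondRel Rules i t u) :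
    CondRel Rules i (subst σ t) (subst σ u) := by
  cases i with
  | zero => exact h.elim
  | succ i => exact CondStep.substC σ h

theorem condRel_succ (i : ℕ) (t u : Tm Sig) (h : CondRel Rules i t u) :
    CondRel Rules (i + 1) t u := by
  induction i generalizing t u with
  | zero => exact h.elim
  | succ i ih => exact condStep_mono ih h

theorem condRel_mono {i j : ℕ} (hij : i ≤ j) (t u : Tm Sig) (h : CondRel Rules i t u) :
    CondRel Rules j t u := by
  induction hij with
  | refl => exact h
  | step _ ih => exact condRel_succ _ _ _ ih

/-- Finitely many eventually true properties hold from a common rank on. -/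
theorem exists_uniform {α : Type} (l : List α) (P : ℕ → α → Prop)
    (hmono : ∀ x ∈ l, ∀ m n, m ≤ n → P m x → P n x) (h : ∀ x ∈ l, ∃ n, P n x) :
    ∃ N, ∀ x ∈ l, P N x := by
  induction l with
  | nil => exact ⟨0, by simp⟩
  | cons y ys ih =>
    obtain ⟨n, hn⟩ := h y (by simp)
    obtain ⟨m, hm⟩ := ih (fun x hx => hmono x (by simp [hx])) fun x hx => h x (by simp [hx])
    refine ⟨max m n, fun x hx => ?_⟩
    rcases List.mem_cons.1 hx with rfl | hx
    · exact hmono _ (by simp) _ _ (le_max_right _ _) hn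
    · exact hmono _ (by simp [hx]) _ _ (le_max_left _ _) (hm x hx)

theorem condRew_star_level {t u : Tm Sig} (h : ReflTransGen (CondRew Rules) t u) :
    ∃ i, ReflTransGen (CondRel Rules i) t u := by
  induction h with
  | refl => exact ⟨0, .refl⟩
  | tail _ h ih =>
    obtain ⟨i, hi⟩ := ih
    obtain ⟨j, hj⟩ := h
    exact ⟨max i j, (star_mono hi (condRel_mono (le_max_left _ _))).tail
      (condRel_mono (le_max_right _ _) _ _ hj)⟩

theorem isRew_condRew : IsRew (CondRew Rules) where
  abs := fun ⟨i, h⟩ => ⟨i + 1, .abs (condRel_succ i _ _ h)⟩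
  appL := fun ⟨i, h⟩ => ⟨i + 1, .appL (condRel_succ i _ _ h)⟩
  appR := fun ⟨i, h⟩ => ⟨i + 1, .appR (condRel_succ i _ _ h)⟩
  sub := fun σ _ _ ⟨i, h⟩ => ⟨i, condRel_sub i σ _ _ h⟩

/-- Each rule has finitely many conditions, so joinability for `→_R` is witnessed at some stratum. -/
theorem condRew_rule {ρ : CondRule Sig} (hρ : ρ ∈ Rules) (σ : ℕ → Tm Sig)
    (hc : ∀ p ∈ ρ.conds, Joinable (CondRew Rules) (subst σ p.1) (subst σ p.2)) :
    CondRew Rules (subst σ ρ.lhs) (subst σ ρ.rhs) := by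
  obtain ⟨N, hN⟩ := exists_uniform ρ.conds
    (fun i p => Joinable (CondRel Rules i) (subst σ p.1) (subst σ p.2))
    (fun p _ m n hmn h => joinable_mono (condRel_mono hmn) h) (by
      intro p hp
      obtain ⟨w, h₁, h₂⟩ := hc p hp
      obtain ⟨i, hi⟩ := condRew_star_level h₁
      obtain ⟨j, hj⟩ := condRew_star_level h₂
      exact ⟨max i j, w, star_mono hi (condRel_mono (le_max_left _ _)),
        star_mono hj (condRel_mono (le_max_right _ _))⟩)
  exact ⟨N + 1, .rule hρ σ hN⟩

theorem step_of_condRel {i : ℕ} {t u : Tm Sig} (h : CondRel Rules (i + 1) t u) :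
    Step Rules (CondRel Rules i) t u :=
  step_of_condStep (condRel_sub i) h

theorem step_of_condRew {t u : Tm Sig} (h : CondRew Rules t u) :
    Step Rules (CondRew Rules) t u := by
  obtain ⟨i, h⟩ := h
  cases i with
  | zero => exact h.elim
  | succ i => exact (step_of_condRel h).mono fun _ _ h => ⟨i, h⟩

theorem step_of_bcondRel {i : ℕ} {t u : Tm Sig} (h : BCondRel Rules (i + 1) t u) :
    Step Rules (fun a b => Beta a b ∨ BCondRel Rules i a b) t u := by
  refine step_of_condStep (fun σ t u h => h.imp (.substC σ) fun h => ?_) h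
  cases i with
  | zero => exact h.elim
  | succ i => exact CondStep.substC σ h

theorem condRel_le_bcondRel (i : ℕ) (t u : Tm Sig) (h : CondRel Rules i t u) :
    BCondRel Rules i t u := by
  induction i generalizing t u with
  | zero => exact h.elim
  | succ i ih => exact condStep_mono (fun t u h => Or.inr (ih t u h)) h

theorem lhs_alg (ρ : CondRule Sig) : Alg ρ.lhs := alg_of_algebraic ρ.lhs_alg

theorem Step.lam_inv {prev : Tm Sig → Tm Sig → Prop} {t u : Tm Sig}
    (h : Step Rules prev (lam t) u) : ∃ u', u = lam u' ∧ Step Rules prev t u' := by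
  generalize hs : lam t = s at h
  cases h with
  | @rule ρ hρ σ _ => exact absurd hs.symm ((lhs_alg ρ).subst_ne_lam ρ.lhs_not_var σ t)
  | abs h => cases hs; exact ⟨_, rfl, h⟩
  | appL _ => cases hs
  | appR _ => cases hs

theorem condRew_of_step {t u : Tm Sig} (h : Step Rules (CondRew Rules) t u) :
    CondRew Rules t u := by
  induction h with
  | rule hρ σ hc => exact condRew_rule hρ σ hc
  | abs _ ih => exact isRew_condRew.abs ih
  | appL _ ih => exact isRew_condRew.appL ih
  | appR _ ih => exact isRew_condRew.appR ih

theorem condRew_star_lam_inv {t u : Tm Sig} (h : ReflTransGen (CondRew Rules) (lam t) u) :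
    ∃ u', u = lam u' ∧ ReflTransGen (CondRew Rules) t u' := by
  induction h with
  | refl => exact ⟨t, rfl, .refl⟩
  | tail _ h ih =>
    obtain ⟨v, rfl, hv⟩ := ih
    obtain ⟨w, rfl, hw⟩ := (step_of_condRew h).lam_inv
    exact ⟨w, rfl, hv.tail (condRew_of_step hw)⟩

theorem Step.applicative (halg : AlgebraicSys Rules) {prev : Tm Sig → Tm Sig → Prop}
    {t u : Tm Sig} (h : Step Rules prev t u) (ht : Applicative t) : Applicative u := by
  induction h with
  | @rule ρ hρ σ _ =>
    exact applicative_subst (alg_of_algebraic (halg ρ hρ).2).applicative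
      fun n hn => applicative_of_subst ht (ρ.fv_rhs n hn)
  | abs _ _ => cases ht
  | appL _ ih => cases ht with | app h₁ h₂ => exact .app (ih h₁) h₂
  | appR _ ih => cases ht with | app h₁ h₂ => exact .app h₁ (ih h₂)

theorem condRew_star_applicative (halg : AlgebraicSys Rules) {t u : Tm Sig}
    (h : ReflTransGen (CondRew Rules) t u) (ht : Applicative t) : Applicative u := by
  induction h with
  | refl => exact ht
  | tail _ h ih => exact (step_of_condRew h).applicative halg ih

/-! ### Commutation of conditional rewriting with β -/

/-- A `Q`-step against a parallel β-step can be closed by a parallel β-step and `→R*`. -/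
def StripsPar (Rules : Set (CondRule Sig)) (Q : Tm Sig → Tm Sig → Prop) : Prop :=
  ∀ t t' u, Par t t' → Q t u → ∃ u', Par u u' ∧ ReflTransGen (CondRew Rules) t' u'

theorem StripsPar.star {Q : Tm Sig → Tm Sig → Prop} (hQ : StripsPar Rules Q) {t t' u : Tm Sig}
    (hp : Par t t') (h : ReflTransGen Q t u) :
    ∃ u', Par u u' ∧ ReflTransGen (CondRew Rules) t' u' := by
  induction h with
  | refl => exact ⟨t', hp, .refl⟩
  | tail _ h ih =>
    obtain ⟨v, hv, hr⟩ := ih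
    obtain ⟨w, hw, hr'⟩ := hQ _ _ _ hv h
    exact ⟨w, hw, hr.trans hr'⟩

/-- Satisfied conditions stay satisfied under parallel β-reduction of the substitution, because a
common reduct with the closed applicative right-hand term is unchanged by parallel β-reduction. -/
theorem cond_par (halg : AlgebraicSys Rules) {Q : Tm Sig → Tm Sig → Prop}
    (hQ : StripsPar Rules Q) (hQR : ∀ t u, Q t u → CondRew Rules t u) {d c : Tm Sig}
    (hc : Applicative c ∧ ClosedTm c) {σ τ : ℕ → Tm Sig} (hστ : ∀ n, Par (σ n) (τ n))
    (hj : Joinable Q (subst σ d) (subst σ c)) :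
    Joinable (CondRew Rules) (subst τ d) (subst τ c) := by
  obtain ⟨w, h₁, h₂⟩ := hj
  rw [subst_closed σ hc.2] at h₂
  rw [subst_closed τ hc.2]
  have h₂' := star_mono h₂ hQR
  obtain ⟨w', hw, hr⟩ := hQ.star ((Par.rfl' d).subst hστ) h₁
  rw [applicative_par (condRew_star_applicative halg h₂' hc.1) hw] at hr
  exact ⟨w, hr, h₂'⟩

theorem step_par (hsc : SemiClosed Rules) (hll : LeftLinear Rules) (halg : AlgebraicSys Rules)
    {Q : Tm Sig → Tm Sig → Prop} (hQ : StripsPar Rules Q)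
    (hQR : ∀ t u, Q t u → CondRew Rules t u) : StripsPar Rules (Step Rules Q) := by
  intro t t' u hp h
  induction h generalizing t' with
  | @rule ρ hρ σ hc =>
    obtain ⟨τ, hτ, rfl⟩ := pb_subst_alg (lhs_alg ρ) (hll ρ hρ) hp
    exact ⟨_, (Par.rfl' ρ.rhs).subst hτ, .single (condRew_rule hρ τ fun p hpm =>
      cond_par halg hQ hQR (hsc ρ hρ p hpm) hτ (hc p hpm))⟩
  | abs _ ih =>
    cases hp with
    | abs hp =>
      obtain ⟨w, hw, hr⟩ := ih _ hp
      exact ⟨_, .abs hw, isRew_condRew.star_abs hr⟩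
  | appL hs ih =>
    cases hp with
    | app hp₁ hp₂ =>
      obtain ⟨w, hw, hr⟩ := ih _ hp₁
      exact ⟨_, .app hw hp₂, isRew_condRew.star_app hr .refl⟩
    | beta hp₁ hp₂ =>
      obtain ⟨u, rfl, _⟩ := hs.lam_inv
      obtain ⟨w, hw, hr⟩ := ih _ (.abs hp₁)
      cases hw with
      | abs hw =>
        obtain ⟨w', he, hr⟩ := condRew_star_lam_inv hr
        cases he
        exact ⟨_, .beta hw hp₂, isRew_condRew.star_subst1 hr .refl⟩
  | appR _ ih =>
    cases hp with
    | app hp₁ hp₂ =>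
      obtain ⟨w, hw, hr⟩ := ih _ hp₂
      exact ⟨_, .app hp₁ hw, isRew_condRew.star_app .refl hr⟩
    | beta hp₁ hp₂ =>
      obtain ⟨w, hw, hr⟩ := ih _ hp₂
      exact ⟨_, .beta hp₁ hw, isRew_condRew.star_subst1 .refl hr⟩

theorem rew_pb (hsc : SemiClosed Rules) (hll : LeftLinear Rules) (halg : AlgebraicSys Rules) :
    StripsPar Rules (CondRew Rules) := by
  have key : ∀ i, StripsPar Rules (CondRel Rules i) := by
    intro i
    induction i with
    | zero => exact fun _ _ _ _ h => h.elim
    | succ i ih =>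
      exact fun t t' u hp h =>
        step_par hsc hll halg ih (fun _ _ h => ⟨i, h⟩) t t' u hp (step_of_condRel h)
  exact fun t t' u hp ⟨i, h⟩ => key i t t' u hp h

theorem rew_pb_star (hsc : SemiClosed Rules) (hll : LeftLinear Rules) (halg : AlgebraicSys Rules)
    {t t' u : Tm Sig} (hb : ReflTransGen Beta t t') (hr : ReflTransGen (CondRew Rules) t u) :
    ∃ u', ReflTransGen Beta u u' ∧ ReflTransGen (CondRew Rules) t' u' := by
  induction hb with
  | refl => exact ⟨u, .refl, hr⟩
  | tail _ hb ih =>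
    obtain ⟨v, hv, hr'⟩ := ih
    obtain ⟨w, hw, hr''⟩ := (rew_pb hsc hll halg).star (.of_beta hb) hr'
    exact ⟨w, hv.trans hw.beta_star, hr''⟩

/-! ### Developments of terms respecting the arity -/

theorem subst_appList (σ : ℕ → Tm Sig) (h : Tm Sig) (ts : List (Tm Sig)) :
    subst σ (appList h ts) = appList (subst σ h) (ts.map (subst σ)) := by
  induction ts generalizing h with
  | nil => rfl
  | cons u us ih => simp only [appList, List.map_cons, ih]; rfl

theorem app_appList (h v : Tm Sig) (ts : List (Tm Sig)) :
    app (appList h ts) v = appList h (ts ++ [v]) := by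
  induction ts generalizing h with
  | nil => rfl
  | cons u us ih => exact ih _

theorem not_respectsArity_lhs_app {a : Sig → ℕ} {ρ : CondRule Sig} (h : RuleRespectsArity a ρ)
    (σ : ℕ → Tm Sig) (v : Tm Sig) : ¬ RespectsArity a (app (subst σ ρ.lhs) v) := by
  intro hr
  obtain ⟨f, ls, hl, hlen⟩ := h.2.2.2
  have := hr f (ls.map (subst σ) ++ [v]) (by
    rw [← app_appList, hl, subst_appList]
    exact .refl _)
  simp [hlen] at this

/-- `→R`-steps create no β-redex on terms respecting the arity, hence they pass to developments. -/
theorem rew_dev {a : Sig → ℕ} (hsc : SemiClosed Rules) (hll : LeftLinear Rules)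
    (halg : AlgebraicSys Rules) (harr : SysRespectsArity a Rules) {t u : Tm Sig}
    (h : CondRew Rules t u) (ht : RespectsArity a t) :
    ReflTransGen (CondRew Rules) (dev t) (dev u) := by
  have h := step_of_condRew h
  induction h with
  | @rule ρ hρ σ hc =>
    rw [(lhs_alg ρ).dev_subst, (alg_of_algebraic (halg ρ hρ).2).dev_subst]
    exact .single (condRew_rule hρ _ fun p hp =>
      cond_par halg (rew_pb hsc hll halg) (fun _ _ h => h) (hsc ρ hρ p hp)
        (fun n => (Par.rfl' (σ n)).triangle) (hc p hp))
  | abs hs ih =>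
    exact isRew_condRew.star_abs
      (ih (condRew_of_step hs) fun f ts hsub => ht f ts (.lam hsub))
  | @appL t u v hs ih =>
    have ih := ih (condRew_of_step hs) fun f ts hsub => ht f ts (.appL hsub)
    by_cases hl : ∃ s, t = lam s
    · obtain ⟨s, rfl⟩ := hl
      obtain ⟨s', rfl, _⟩ := hs.lam_inv
      obtain ⟨w, hw, ih⟩ := condRew_star_lam_inv ih
      simp only [dev] at hw ⊢
      cases hw
      exact isRew_condRew.star_subst1 ih .refl
    · have hu : ∀ s, u ≠ lam s := by
        rintro s rfl
        -- Creating an abstraction in head position requires a root step below an application.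
        generalize hw : lam s = w at hs
        cases hs with
        | @rule ρ hρ σ _ => exact not_respectsArity_lhs_app (harr ρ hρ) σ v ht
        | abs _ => exact hl ⟨_, rfl⟩
        | appL _ => cases hw
        | appR _ => cases hw
      rw [dev_app v (not_exists.mp hl), dev_app v hu]
      exact isRew_condRew.star_app ih .refl
  | @appR t u v hs ih =>
    have ih := ih (condRew_of_step hs) fun f ts hsub => ht f ts (.appR hsub)
    by_cases hl : ∃ s, v = lam s
    · obtain ⟨s, rfl⟩ := hl
      simp only [dev]
      exact isRew_condRew.star_subst1 .refl ih
    · rw [dev_app t (not_exists.mp hl), dev_app u (not_exists.mp hl)]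
      exact isRew_condRew.star_app .refl ih

/-! ### Stable sets -/

variable {a : Sig → ℕ} {S : Set (Tm Sig)}

theorem mem_beta_star (hS : CondStable Rules a S) {t u : Tm Sig} (ht : t ∈ S)
    (h : ReflTransGen Beta t u) : u ∈ S := by
  induction h with
  | refl => exact ht
  | tail _ h ih => exact hS.2.1 _ ih _ (Or.inl h)

theorem mem_step (hS : CondStable Rules a S) {prev : Tm Sig → Tm Sig → Prop} {t u : Tm Sig}
    (ht : t ∈ S) (h : Step Rules prev t u) : u ∈ S :=
  hS.2.1 _ ht _ (Or.inr h.barRel)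

theorem mem_rew_star (hS : CondStable Rules a S) {t u : Tm Sig} (ht : t ∈ S)
    (h : ReflTransGen (CondRew Rules) t u) : u ∈ S := by
  induction h with
  | refl => exact ht
  | tail _ h ih => exact mem_step hS ih (step_of_condRew h)

theorem mem_bstep (hS : CondStable Rules a S) {i : ℕ} {t u : Tm Sig} (ht : t ∈ S)
    (h : Beta t u ∨ BCondRel Rules i t u) : u ∈ S := by
  rcases h with h | h
  · exact hS.2.1 _ ht _ (Or.inl h)
  · cases i with
    | zero => exact h.elim
    | succ i => exact mem_step hS ht (step_of_bcondRel h)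

theorem rew_star_dev_iter (hsc : SemiClosed Rules) (hll : LeftLinear Rules)
    (halg : AlgebraicSys Rules) (harr : SysRespectsArity a Rules) (hS : CondStable Rules a S)
    (n : ℕ) {t u : Tm Sig} (ht : t ∈ S) (h : ReflTransGen (CondRew Rules) t u) :
    ReflTransGen (CondRew Rules) (dev^[n] t) (dev^[n] u) := by
  induction n generalizing t u with
  | zero => exact h
  | succ n ih =>
    refine ih (mem_beta_star hS ht (beta_dev t)) ?_
    induction h with
    | refl => exact .refl
    | tail h h' ih' =>
      exact ih'.trans (rew_dev hsc hll halg harr h' (hS.1 _ (mem_rew_star hS ht h)))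

/-! ### Factorization of β-conditional rewriting -/

/-- The factorization `t →β* t' →R* u' ←β* u`. -/
def Factor (Rules : Set (CondRule Sig)) (t u : Tm Sig) : Prop :=
  ∃ t' u', ReflTransGen Beta t t' ∧ ReflTransGen (CondRew Rules) t' u' ∧ ReflTransGen Beta u u'

theorem Factor.abs {t u : Tm Sig} : Factor Rules t u → Factor Rules (lam t) (lam u) :=
  fun ⟨_, _, h₁, h₂, h₃⟩ => ⟨_, _, isRew_beta.star_abs h₁, isRew_condRew.star_abs h₂,
    isRew_beta.star_abs h₃⟩

theorem Factor.appL {t u v : Tm Sig} : Factor Rules t u → Factor Rules (app t v) (app u v) :=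
  fun ⟨_, _, h₁, h₂, h₃⟩ => ⟨_, _, isRew_beta.star_app h₁ .refl, isRew_condRew.star_app h₂ .refl,
    isRew_beta.star_app h₃ .refl⟩

theorem Factor.appR {t u v : Tm Sig} : Factor Rules t u → Factor Rules (app v t) (app v u) :=
  fun ⟨_, _, h₁, h₂, h₃⟩ => ⟨_, _, isRew_beta.star_app .refl h₁, isRew_condRew.star_app .refl h₂,
    isRew_beta.star_app .refl h₃⟩

/-- Factorizations compose on a stable set: both middle parts are moved to an iterated
development of the middle term. -/
theorem Factor.comp (hsc : SemiClosed Rules) (hll : LeftLinear Rules)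
    (halg : AlgebraicSys Rules) (harr : SysRespectsArity a Rules) (hS : CondStable Rules a S)
    {t u v : Tm Sig} (ht : t ∈ S) (h : Factor Rules t u) (h' : Factor Rules u v) :
    Factor Rules t v := by
  obtain ⟨t₁, u₁, h₁, h₂, h₃⟩ := h
  obtain ⟨u₂, v₂, h₄, h₅, h₆⟩ := h'
  obtain ⟨x, hx₁, hx₂⟩ := beta_confluent h₃ h₄
  obtain ⟨n, hn⟩ := beta_cofinal hx₁
  obtain ⟨w, hw, hr⟩ := rew_pb_star hsc hll halg (hx₂.trans hn) h₅
  exact ⟨dev^[n] t₁, w, h₁.trans (beta_dev_iter n t₁),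
    (rew_star_dev_iter hsc hll halg harr hS n (mem_beta_star hS ht h₁) h₂).trans hr,
    h₆.trans hw⟩

theorem factor_star (hsc : SemiClosed Rules) (hll : LeftLinear Rules)
    (halg : AlgebraicSys Rules) (harr : SysRespectsArity a Rules) (hS : CondStable Rules a S)
    {Q : Tm Sig → Tm Sig → Prop} (hQS : ∀ t ∈ S, ∀ u, Q t u → u ∈ S)
    (hQ : ∀ t ∈ S, ∀ u, Q t u → Factor Rules t u) {t u : Tm Sig} (ht : t ∈ S)
    (h : ReflTransGen Q t u) : Factor Rules t u := by
  suffices u ∈ S ∧ Factor Rules t u from this.2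
  induction h with
  | refl => exact ⟨ht, t, t, .refl, .refl, .refl⟩
  | tail _ h ih =>
    exact ⟨hQS _ ih.1 _ h, ih.2.comp hsc hll halg harr hS ht (hQ _ ih.1 _ h)⟩

/-- On applicative terms `→_{β ∪ R(β)}` coincides with `→_R`: no β-redex ever appears, not even
in the evaluation of conditions. -/
theorem applicative_brew (hsc : SemiClosed Rules) (halg : AlgebraicSys Rules) (i : ℕ) {t u : Tm Sig}
    (ht : Applicative t)
    (h : ReflTransGen (fun a b => Beta a b ∨ BCondRel Rules i a b) t u) :
    ReflTransGen (CondRew Rules) t u ∧ Applicative u := by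
  induction i generalizing t u with
  | zero =>
    have hb := applicative_beta_star ht (star_mono h fun _ _ h => h.resolve_right id)
    subst hb
    exact ⟨.refl, ht⟩
  | succ i ihi =>
    have key : ∀ {t u : Tm Sig}, Applicative t →
        Step Rules (fun a b => Beta a b ∨ BCondRel Rules i a b) t u → CondRew Rules t u := by
      intro t u ht h
      induction h with
      | @rule ρ hρ σ hc =>
        refine condRew_rule hρ σ fun p hp => ?_
        have hσ : ∀ n, FVar ρ.lhs n → Applicative (σ n) := fun n hn => applicative_of_subst ht hn
        obtain ⟨w, h₁, h₂⟩ := hc p hp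
        refine ⟨w, (ihi (applicative_subst ?_ ?_) h₁).1, (ihi (applicative_subst ?_ ?_) h₂).1⟩
        · exact (alg_of_algebraic ((halg ρ hρ).1 p hp).1).applicative
        · exact fun n hn => hσ n ((ρ.fv_conds p hp).1 n hn)
        · exact (hsc ρ hρ p hp).1
        · exact fun n hn => hσ n ((ρ.fv_conds p hp).2 n hn)
      | abs _ _ => cases ht
      | appL _ ih => cases ht with | app h₁ _ => exact isRew_condRew.appL (ih h₁)
      | appR _ ih => cases ht with | app _ h₂ => exact isRew_condRew.appR (ih h₂)
    induction h with
    | refl => exact ⟨.refl, ht⟩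
    | @tail v w _ h ih =>
      rcases h with h | h
      · have := applicative_par ih.2 (.of_beta h)
        subst this
        exact ih
      · have hs := step_of_bcondRel h
        exact ⟨ih.1.tail (key ih.2 hs), hs.applicative halg ih.2⟩

/-- By induction on the stratum: the conditions of an `R(β)_{i+1}`-step are factored at level `i`. -/
theorem factor_step (hsc : SemiClosed Rules) (hll : LeftLinear Rules)
    (halg : AlgebraicSys Rules) (harr : SysRespectsArity a Rules) (hS : CondStable Rules a S)
    (i : ℕ) {t u : Tm Sig} (ht : t ∈ S) (h : Beta t u ∨ BCondRel Rules i t u) :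
    Factor Rules t u := by
  induction i generalizing t u with
  | zero => exact ⟨u, u, .single (h.resolve_right id), .refl, .refl⟩
  | succ i ihi =>
    rcases h with h | h
    · exact ⟨u, u, .single h, .refl, .refl⟩
    replace h := step_of_bcondRel h
    induction h with
    | @rule ρ hρ σ hc =>
      -- The conditions become joinable for `→R` once the substitution is developed often enough;
      -- they then stay joinable, so one number `N` of developments serves all of them.
      obtain ⟨N, hN⟩ := exists_uniform ρ.conds
        (fun n p => Joinable (CondRew Rules) (subst (fun k => dev^[n] (σ k)) p.1)
          (subst (fun k => dev^[n] (σ k)) p.2))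
        (fun p hp m n hmn h => by
          induction hmn with
          | refl => exact h
          | @step n _ ih =>
            have hpm : ∀ k, Par (dev^[n] (σ k)) (dev^[n + 1] (σ k)) := fun k => by
              rw [Function.iterate_succ_apply]
              exact (Par.rfl' (σ k)).triangle.dev_iter n
            exact cond_par halg (rew_pb hsc hll halg) (fun _ _ h => h) (hsc ρ hρ p hp) hpm ih)
        (by
          intro p hp
          obtain ⟨w, h₁, h₂⟩ := hc p hp
          have hcl := hsc ρ hρ p hp
          rw [subst_closed σ hcl.2] at h₂
          obtain ⟨h₂, hw⟩ := applicative_brew hsc halg i hcl.1 h₂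
          have hmem : subst σ p.1 ∈ S := hS.2.1 _ ht _ (Or.inr (.ruleCond hρ hp σ))
          obtain ⟨s, s', hs₁, hs₂, hs₃⟩ := factor_star hsc hll halg harr hS
            (fun t ht u h => mem_bstep hS ht h) (fun t ht u h => ihi ht h) hmem h₁
          have := applicative_beta_star hw hs₃
          subst this
          obtain ⟨n, hn⟩ := beta_cofinal hs₁
          rw [(alg_of_algebraic ((halg ρ hρ).1 p hp).1).dev_iter_subst] at hn
          obtain ⟨w', hw', hr⟩ := rew_pb_star hsc hll halg hn hs₂
          rw [applicative_beta_star hw hw'] at hr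
          exact ⟨n, _, hr, by rwa [subst_closed _ hcl.2]⟩)
      exact ⟨_, _, isRew_beta.star_subst ρ.lhs fun k => beta_dev_iter N (σ k),
        .single (condRew_rule hρ _ hN), isRew_beta.star_subst ρ.rhs fun k => beta_dev_iter N (σ k)⟩
    | abs _ ih => exact .abs (ih (hS.2.2 _ ht _ (.lam (.refl _))))
    | appL _ ih => exact .appL (ih (hS.2.2 _ ht _ (.appL (.refl _))))
    | appR _ ih => exact .appR (ih (hS.2.2 _ ht _ (.appR (.refl _))))

end CondBeta

/-- If `R` is semi-closed, left-linear, algebraic and respects the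
arity `a`, then on any conditionally `(R,a)`-stable set of terms, confluence of
`→_R` implies confluence of `→_{β∪R(β)}`. -/
theorem confluence_beta_union_bcond_stable {Sig : Type} (a : Sig → ℕ)
    (Rules : Set (CondRule Sig))
    (hsc : SemiClosed Rules) (hll : LeftLinear Rules) (halg : AlgebraicSys Rules)
    (harr : SysRespectsArity a Rules)
    (S : Set (Tm Sig)) (hS : CondStable Rules a S)
    (hconf : ConfluentOn S (CondRew Rules)) :
    ConfluentOn S (fun t u : Tm Sig => Beta t u ∨ BCondRew Rules t u) := by
  intro t ht u v hu hv
  have hQS : ∀ t ∈ S, ∀ u, (Beta t u ∨ BCondRew Rules t u) → u ∈ S := by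
    rintro t ht u (h | ⟨i, h⟩)
    · exact CondBeta.mem_bstep (i := 0) hS ht (Or.inl h)
    · exact CondBeta.mem_bstep hS ht (Or.inr h)
  have hQ : ∀ t ∈ S, ∀ u, (Beta t u ∨ BCondRew Rules t u) → CondBeta.Factor Rules t u := by
    rintro t ht u (h | ⟨i, h⟩)
    · exact CondBeta.factor_step hsc hll halg harr hS 0 ht (Or.inl h)
    · exact CondBeta.factor_step hsc hll halg harr hS i ht (Or.inr h)
  obtain ⟨t₁, u₁, h₁, h₂, h₃⟩ := CondBeta.factor_star hsc hll halg harr hS hQS hQ ht hu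
  obtain ⟨t₂, v₂, h₄, h₅, h₆⟩ := CondBeta.factor_star hsc hll halg harr hS hQS hQ ht hv
  obtain ⟨x, hx₁, hx₂⟩ := CondBeta.beta_confluent h₁ h₄
  obtain ⟨u₃, hu₃, hr₁⟩ := CondBeta.rew_pb_star hsc hll halg hx₁ h₂
  obtain ⟨v₃, hv₃, hr₂⟩ := CondBeta.rew_pb_star hsc hll halg hx₂ h₅
  have hx : x ∈ S := CondBeta.mem_beta_star hS ht (h₁.trans hx₁)
  obtain ⟨w, hw₁, hw₂⟩ := hconf x hx u₃ v₃ hr₁ hr₂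
  have hRB : ∀ t u, CondRew Rules t u → Beta t u ∨ BCondRew Rules t u :=
    fun t u ⟨i, h⟩ => Or.inr ⟨i, CondBeta.condRel_le_bcondRel i t u h⟩
  exact ⟨w, (CondBeta.star_mono (h₃.trans hu₃) fun _ _ => Or.inl).trans (CondBeta.star_mono hw₁ hRB),
    (CondBeta.star_mono (h₆.trans hv₃) fun _ _ => Or.inl).trans (CondBeta.star_mono hw₂ hRB)⟩
end
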